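/- Let f : U → ℂ^n be a continuous map on a set U ⊆ ℂ, let E ⊆ ℂ^n, and let h be plurisubharmonic on ℂ^n with h = -∞ on E. Suppose f(U) ∩ E ≠ ∅ and the composition h ∘ f, when subharmonic-or-≡-∞ on a domain U, takes the value -∞ on the non-polar set f^{-1}(f(U) ∩ E). Then h ∘ f ≡ -∞ on U and hence h = -∞ on f(U), i.e., f(U) ⊆ E*_{ℂ^n} when f is holomorphic on a domain U ⊆ ℂ. -/

import Mathlib

open Metric Set MeasureTheory Filter Topology

noncomputable section

/-- Harmonicity on a set, expressed by continuity together with the circle mean value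
property on all closed balls contained in the set. -/
def HarmonicMVP (h : ℂ → ℝ) (s : Set ℂ) : Prop :=
  ContinuousOn h s ∧
  ∀ c : ℂ, ∀ r : ℝ, 0 < r → closedBall c r ⊆ s →
    h c = (2 * Real.pi)⁻¹ *
      ∫ θ in (0:ℝ)..(2 * Real.pi), h (c + r * Complex.exp (θ * Complex.I))

/-- Subharmonicity of a `[-∞, ∞)`-valued function (modeled as `EReal`-valued) on a set:
upper semicontinuity together with the harmonic majorant property: on every closed ball
contained in the set, `u` is dominated on the ball by every harmonic function dominating
it on the bounding circle. -/
def SubharmonicOn (u : ℂ → EReal) (U : Set ℂ) : Prop :=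
  UpperSemicontinuousOn u U ∧ (∀ z ∈ U, u z < ⊤) ∧
  ∀ c : ℂ, ∀ r : ℝ, 0 < r → closedBall c r ⊆ U →
    ∀ h : ℂ → ℝ, HarmonicMVP h (closedBall c r) →
      (∀ z ∈ sphere c r, u z ≤ (h z : EReal)) →
      ∀ z ∈ ball c r, u z ≤ (h z : EReal)

/-- A set `E ⊆ ℂ` is polar if it is contained in the `-∞` set of a subharmonic function
on `ℂ` which is not identically `-∞`. -/
def PolarSet (E : Set ℂ) : Prop :=
  ∃ u : ℂ → EReal, SubharmonicOn u Set.univ ∧ ¬ (∀ z, u z = ⊥) ∧ ∀ z ∈ E, u z = ⊥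

/-- Plurisubharmonicity on a subset of `ℂⁿ`: upper semicontinuity together with
subharmonicity of the restriction to every complex line. -/
def PlurisubharmonicOn {n : ℕ} (φ : (Fin n → ℂ) → EReal) (Ω : Set (Fin n → ℂ)) : Prop :=
  UpperSemicontinuousOn φ Ω ∧
  ∀ a b : Fin n → ℂ,
    SubharmonicOn (fun z : ℂ => φ (a + z • b)) {z : ℂ | a + z • b ∈ Ω}

/-- A set `E ⊆ ℂⁿ` is pluripolar (global form, equivalent to the local one by
Josefson's theorem): it is contained in the `-∞` set of a plurisubharmonic function on
`ℂⁿ` which is not identically `-∞`. -/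
def Pluripolar {n : ℕ} (E : Set (Fin n → ℂ)) : Prop :=
  ∃ φ : (Fin n → ℂ) → EReal, PlurisubharmonicOn φ Set.univ ∧
    ¬ (∀ z, φ z = ⊥) ∧ ∀ z ∈ E, φ z = ⊥

/-- The pluripolar hull `E*_Ω` of `E` relative to `Ω`. -/
def PluripolarHull {n : ℕ} (E Ω : Set (Fin n → ℂ)) : Set (Fin n → ℂ) :=
  {z ∈ Ω | ∀ φ : (Fin n → ℂ) → EReal, PlurisubharmonicOn φ Ω →
    (∀ w ∈ E, φ w = ⊥) → φ z = ⊥}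

/-!
The composition `u = h ∘ f` is subharmonic. To see this, cut `h` off from below and approximate it
by sup-convolutions: at each point such a regularisation is touched from below by a translate of `h`
minus a paraboloid, and along a curve the comparison can be made on a complex line tangent to it, so
the sub-mean value inequality holds up to an error of second order.

If `u` is not identically `-∞` on the connected open set `U`, then it is not identically `-∞` on any
open subset. Hence near a circle around a given `p ∈ U` it can be raised, by finitely many Poisson
modifications, to a subharmonic function bounded below there. The result can be glued to a quadratic
`a * ‖z - p‖ ^ 2 - b` outside the circle, which yields a subharmonic function on `ℂ` that is still
`-∞` wherever `u` is `-∞` near `p`, but not at a fixed point of `U`. Countably many of these,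
normalised and added up, show that `{u = -∞}` is polar.
-/

/-! ### Upper semicontinuous functions -/

section UpperSemicontinuous

variable {X : Type*} [TopologicalSpace X]

theorem upperSemicontinuousOn_coe {g : X → ℝ} {s : Set X} (hg : ContinuousOn g s) :
    UpperSemicontinuousOn (fun x => (g x : EReal)) s :=
  (continuous_coe_real_ereal.comp_continuousOn hg).upperSemicontinuousOn

theorem upperSemicontinuousOn_add {u v : X → EReal} {s : Set X} (hu : UpperSemicontinuousOn u s)
    (hv : UpperSemicontinuousOn v s) (hut : ∀ x ∈ s, u x < ⊤) (hvt : ∀ x ∈ s, v x < ⊤) :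
    UpperSemicontinuousOn (fun x => u x + v x) s :=
  hu.add' hv fun x hx =>
    EReal.continuousAt_add (Or.inl (hut x hx).ne) (Or.inr (hvt x hx).ne)

theorem upperSemicontinuousOn_add_coe {v : X → EReal} {g : X → ℝ} {s : Set X}
    (hv : UpperSemicontinuousOn v s) (hg : ContinuousOn g s) :
    UpperSemicontinuousOn (fun x => v x + (g x : EReal)) s :=
  hv.add' (upperSemicontinuousOn_coe hg) fun _ _ =>
    EReal.continuousAt_add (Or.inr (EReal.coe_ne_bot _)) (Or.inr (EReal.coe_ne_top _))

theorem exists_real_forall_le_of_isCompact {v : X → EReal} {C : Set X} (hC : IsCompact C)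
    (hv : UpperSemicontinuousOn v C) (hvt : ∀ x ∈ C, v x < ⊤) :
    ∃ M : ℝ, ∀ x ∈ C, v x ≤ (M : EReal) := by
  rcases C.eq_empty_or_nonempty with rfl | hne
  · exact ⟨0, by simp⟩
  obtain ⟨a, ha, hmax⟩ := hv.exists_isMaxOn hne hC
  obtain ⟨M, hM, -⟩ := EReal.lt_iff_exists_real_btwn.1 (hvt a ha)
  exact ⟨M, fun x hx => (hmax hx).trans hM.le⟩

end UpperSemicontinuous

theorem exists_real_lt_and_lt_sub {a b : EReal} {k : ℝ} (ha : a < ⊤) (hb : b < ⊤)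
    (hab : a + b < k) : ∃ t : ℝ, a < t ∧ b < ((k - t : ℝ) : EReal) := by
  induction a with
  | top => exact absurd ha (lt_irrefl _)
  | bot =>
    obtain ⟨s, hs, -⟩ := EReal.lt_iff_exists_real_btwn.1 hb
    exact ⟨k - s, EReal.bot_lt_coe _, by simpa using hs⟩
  | coe a =>
    induction b with
    | top => exact absurd hb (lt_irrefl _)
    | bot => exact ⟨a + 1, by exact_mod_cast lt_add_one a, EReal.bot_lt_coe _⟩
    | coe b =>
      have hab : a + b < k := by exact_mod_cast hab
      refine ⟨(a + (k - b)) / 2, ?_, ?_⟩ <;> norm_cast <;> linarith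

/-- The interval of admissible values of `φ x` is convex and, by semicontinuity, each of its points
stays admissible nearby, so a partition of unity produces `φ`. -/
theorem exists_continuousOn_lt_and_lt_sub {X : Type*} [MetricSpace X] {s : Set X}
    {u v : X → EReal} {k : X → ℝ} (hu : UpperSemicontinuousOn u s) (hv : UpperSemicontinuousOn v s)
    (hut : ∀ x ∈ s, u x < ⊤) (hvt : ∀ x ∈ s, v x < ⊤) (hk : ContinuousOn k s)
    (huvk : ∀ x ∈ s, u x + v x < k x) :
    ∃ φ : X → ℝ, ContinuousOn φ s ∧ ∀ x ∈ s, u x < φ x ∧ v x < ((k x - φ x : ℝ) : EReal) := by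
  obtain ⟨φ, hφ⟩ := exists_continuous_forall_mem_convex_of_local_const (X := s) (E := ℝ)
    (t := fun x => {t : ℝ | u x < t ∧ v x < ((k x - t : ℝ) : EReal)})
    (fun x => Set.OrdConnected.convex ⟨fun a ha b hb t ht =>
      ⟨ha.1.trans_le (EReal.coe_le_coe_iff.2 ht.1),
        hb.2.trans_le (EReal.coe_le_coe_iff.2 (by linarith [ht.2]))⟩⟩)
    (fun x => by
      obtain ⟨a, hua, hva⟩ := exists_real_lt_and_lt_sub (hut x x.2) (hvt x x.2) (huvk x x.2)
      obtain ⟨b, hvb, hba⟩ := EReal.lt_iff_exists_real_btwn.1 hva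
      have hba : b < k x - a := by exact_mod_cast hba
      have hcont : ContinuousAt (fun y : s => k y - a) x :=
        ((continuousOn_iff_continuous_domRestrict.1 hk).sub continuous_const).continuousAt
      refine ⟨a, ?_⟩
      filter_upwards [eventually_nhds_subtype_iff s x _ |>.2 (hu x x.2 a hua),
        eventually_nhds_subtype_iff s x _ |>.2 (hv x x.2 b hvb),
        hcont.eventually (lt_mem_nhds hba)] with y hy hy' hy''
      exact ⟨hy, hy'.trans (by exact_mod_cast hy'')⟩)
  classical
  refine ⟨fun x => if hx : x ∈ s then φ ⟨x, hx⟩ else 0, ?_, fun x hx => ?_⟩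
  · rw [continuousOn_iff_continuous_domRestrict]
    convert φ.continuous using 1
    ext x
    simp
  · simpa [hx] using hφ ⟨x, hx⟩

/-! ### Harmonic functions -/

namespace HarmonicMVP

variable {g h : ℂ → ℝ} {s t : Set ℂ} {c : ℂ} {r : ℝ}

theorem mono (hh : HarmonicMVP h s) (hts : t ⊆ s) : HarmonicMVP h t :=
  ⟨hh.1.mono hts, fun c r hr hc => hh.2 c r hr (hc.trans hts)⟩

theorem circleAverage_eq (hh : HarmonicMVP h s) (hr : 0 < r) (hc : closedBall c r ⊆ s) :
    Real.circleAverage h c r = h c :=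
  (hh.2 c r hr hc).symm

theorem circleIntegrable (hh : HarmonicMVP h s) (hr : 0 < r) (hc : closedBall c r ⊆ s) :
    CircleIntegrable h c r :=
  (hh.1.mono (sphere_subset_closedBall.trans hc)).circleIntegrable hr.le

theorem const (a : ℝ) : HarmonicMVP (fun _ => a) s :=
  ⟨continuousOn_const, fun c r _ _ => (Real.circleAverage_const a c r).symm⟩

theorem add (hg : HarmonicMVP g s) (hh : HarmonicMVP h s) :
    HarmonicMVP (fun z => g z + h z) s := by
  refine ⟨hg.1.add hh.1, fun c r hr hc => Eq.symm ?_⟩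
  exact (Real.circleAverage_fun_add (hg.circleIntegrable hr hc) (hh.circleIntegrable hr hc)).trans
    (by rw [hg.circleAverage_eq hr hc, hh.circleAverage_eq hr hc])

theorem const_mul (a : ℝ) (hh : HarmonicMVP h s) : HarmonicMVP (fun z => a * h z) s :=
  ⟨continuousOn_const.mul hh.1, fun c r hr hc => Eq.symm <|
    (Real.circleAverage_fun_smul (a := a) (f := h)).trans (by rw [hh.circleAverage_eq hr hc]; rfl)⟩

theorem sub (hg : HarmonicMVP g s) (hh : HarmonicMVP h s) :
    HarmonicMVP (fun z => g z - h z) s := by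
  simpa [sub_eq_add_neg] using hg.add (hh.const_mul (-1))

end HarmonicMVP

theorem harmonicMVP_re {F : ℂ → ℂ} {s : Set ℂ} (hF : DifferentiableOn ℂ F s) :
    HarmonicMVP (fun z => (F z).re) s := by
  refine ⟨Complex.continuous_re.comp_continuousOn hF.continuousOn, fun c r hr hc => ?_⟩
  have hFc : DiffContOnCl ℂ F (ball c |r|) := by
    refine DifferentiableOn.diffContOnCl ?_
    rw [abs_of_pos hr, closure_ball c hr.ne']
    exact hF.mono hc
  have hint : CircleIntegrable F c r :=
    (hF.continuousOn.mono (sphere_subset_closedBall.trans hc)).circleIntegrable hr.le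
  have := Complex.reCLM.circleAverage_comp_comm hint
  rw [hFc.circleAverage] at this
  exact this.symm

theorem circleAverage_norm_sq {H : Type*} [NormedAddCommGroup H] [InnerProductSpace ℂ H]
    {P : ℂ → H} {c : ℂ} {r : ℝ} (hr : 0 < r) (hP : DifferentiableOn ℂ P (closedBall c r)) :
    Real.circleAverage (fun w => ‖P w‖ ^ 2) c r =
      ‖P c‖ ^ 2 + Real.circleAverage (fun w => ‖P w - P c‖ ^ 2) c r := by
  have hharm : HarmonicMVP (fun w => ‖P c‖ ^ 2 + 2 * (inner ℂ (P c) (P w - P c)).re)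
      (closedBall c r) := by
    refine (HarmonicMVP.const _).add (HarmonicMVP.const_mul _ (harmonicMVP_re ?_))
    exact (innerSL ℂ (P c)).differentiable.comp_differentiableOn (hP.sub_const _)
  have hsq : CircleIntegrable (fun w => ‖P w - P c‖ ^ 2) c r :=
    (((hP.continuousOn.sub continuousOn_const).norm.pow 2).mono
      sphere_subset_closedBall).circleIntegrable hr.le
  have hexpand : (fun w => ‖P w‖ ^ 2) = fun w =>
      (‖P c‖ ^ 2 + 2 * (inner ℂ (P c) (P w - P c)).re) + ‖P w - P c‖ ^ 2 := by
    ext w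
    have := norm_add_sq (𝕜 := ℂ) (P c) (P w - P c)
    rwa [add_sub_cancel] at this
  rw [hexpand, Real.circleAverage_fun_add (hharm.circleIntegrable hr le_rfl) hsq,
    hharm.circleAverage_eq hr le_rfl]
  simp

theorem circleAverage_norm_sub_sq (p c : ℂ) {r : ℝ} (hr : 0 < r) :
    Real.circleAverage (fun w => ‖w - p‖ ^ 2) c r = ‖c - p‖ ^ 2 + r ^ 2 := by
  rw [circleAverage_norm_sq hr (P := fun w => w - p) (by fun_prop)]
  congr 1
  refine Real.circleAverage_const_on_circle fun w hw => ?_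
  rw [abs_of_pos hr, mem_sphere, dist_eq_norm] at hw
  simp [hw]

/-! ### The infinitesimal sub-mean value inequality -/

/-- Sub-mean value inequality at `z` for small circles, up to an error `o(ρ ^ 2)` on the circle of
radius `ρ`; this is the local form of subharmonicity. As `v` need not be integrable, its circle
average is replaced by those of its continuous majorants. -/
def SubmeanAt (v : ℂ → EReal) (z : ℂ) : Prop :=
  ∀ ε > 0, ∀ᶠ ρ in 𝓝[>] (0 : ℝ), ∀ φ : ℂ → ℝ, ContinuousOn φ (sphere z ρ) →
    (∀ w ∈ sphere z ρ, v w ≤ φ w) → v z ≤ ((Real.circleAverage φ z ρ + ε * ρ ^ 2 : ℝ) : EReal)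

theorem eventually_nhdsGT_closedBall_subset {z : ℂ} {W : Set ℂ} (hW : W ∈ 𝓝 z) :
    ∀ᶠ ρ in 𝓝[>] (0 : ℝ), closedBall z ρ ⊆ W :=
  nhdsWithin_le_nhds (eventually_closedBall_subset hW)

theorem SubmeanAt.of_le {u v : ℂ → EReal} {z : ℂ} (hu : SubmeanAt u z)
    (hle : ∀ᶠ w in 𝓝 z, u w ≤ v w) (hz : v z ≤ u z) : SubmeanAt v z := by
  intro ε hε
  filter_upwards [hu ε hε, eventually_nhdsGT_closedBall_subset hle]
    with ρ huρ hleρ φ hφ hvφ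
  exact hz.trans <| huρ φ hφ fun w hw =>
    (hleρ (sphere_subset_closedBall hw)).trans (hvφ w hw)

theorem submeanAt_coe {g : ℂ → ℝ} {z : ℂ} (hg : ∀ᶠ ρ in 𝓝[>] (0 : ℝ), CircleIntegrable g z ρ)
    (hgz : ∀ ε > 0, ∀ᶠ ρ in 𝓝[>] (0 : ℝ), g z ≤ Real.circleAverage g z ρ + ε * ρ ^ 2) :
    SubmeanAt (fun w => (g w : EReal)) z := by
  intro ε hε
  filter_upwards [hg, hgz ε hε, self_mem_nhdsWithin] with ρ hgρ hgzρ (hρ : 0 < ρ) φ hφ hgφ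
  refine EReal.coe_le_coe_iff.2 (hgzρ.trans (add_le_add_left ?_ _))
  refine Real.circleAverage_mono hgρ (hφ.circleIntegrable hρ.le) fun w hw => ?_
  rw [abs_of_pos hρ] at hw
  exact EReal.coe_le_coe_iff.1 (hgφ w hw)

theorem HarmonicMVP.submeanAt {h : ℂ → ℝ} {s : Set ℂ} {z : ℂ} (hh : HarmonicMVP h s)
    (hs : s ∈ 𝓝 z) : SubmeanAt (fun w => (h w : EReal)) z := by
  have hball := eventually_nhdsGT_closedBall_subset hs
  refine submeanAt_coe ?_ fun ε hε => ?_
  · filter_upwards [hball, self_mem_nhdsWithin] with ρ hρs hρ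
    exact hh.circleIntegrable hρ hρs
  · filter_upwards [hball, self_mem_nhdsWithin] with ρ hρs hρ
    rw [hh.circleAverage_eq hρ hρs]
    exact le_add_of_nonneg_right (by positivity)

theorem submeanAt_const_mul_norm_sub_sq_sub {a : ℝ} (ha : 0 ≤ a) (b : ℝ) (p z : ℂ) :
    SubmeanAt (fun w => ((a * ‖w - p‖ ^ 2 - b : ℝ) : EReal)) z := by
  refine submeanAt_coe (Eventually.of_forall fun ρ => ?_) fun ε hε => ?_
  · exact ContinuousOn.circleIntegrable' (by fun_prop)
  · filter_upwards [self_mem_nhdsWithin] with ρ (hρ : 0 < ρ)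
    rw [Real.circleAverage_fun_sub (ContinuousOn.circleIntegrable' (by fun_prop))
      (ContinuousOn.circleIntegrable' (by fun_prop)), Real.circleAverage_const]
    have := Real.circleAverage_fun_smul (a := a) (f := fun w => ‖w - p‖ ^ 2) (c := z) (R := ρ)
    simp only [smul_eq_mul] at this
    rw [this, circleAverage_norm_sub_sq p z hρ, mul_add]
    have : 0 ≤ a * ρ ^ 2 + ε * ρ ^ 2 := by positivity
    linarith

theorem SubmeanAt.add {u v : ℂ → EReal} {z : ℂ} {V : Set ℂ} (hV : V ∈ 𝓝 z)
    (hu : UpperSemicontinuousOn u V) (hv : UpperSemicontinuousOn v V) (hut : ∀ w ∈ V, u w < ⊤)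
    (hvt : ∀ w ∈ V, v w < ⊤) (huz : SubmeanAt u z) (hvz : SubmeanAt v z) :
    SubmeanAt (fun w => u w + v w) z := by
  intro ε hε
  filter_upwards [huz (ε / 3) (by positivity), hvz (ε / 3) (by positivity),
    eventually_nhdsGT_closedBall_subset hV, self_mem_nhdsWithin]
    with ρ huρ hvρ hVρ (hρ : 0 < ρ) φ hφ huvφ
  have hSV : sphere z ρ ⊆ V := sphere_subset_closedBall.trans hVρ
  obtain ⟨ψ, hψ, hlt⟩ := exists_continuousOn_lt_and_lt_sub (k := fun w => φ w + ε / 3 * ρ ^ 2)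
    (hu.mono hSV) (hv.mono hSV) (fun w hw => hut w (hSV hw)) (fun w hw => hvt w (hSV hw))
    (by fun_prop) fun w hw => (huvφ w hw).trans_lt <|
      EReal.coe_lt_coe_iff.2 (lt_add_of_pos_right _ (by positivity))
  have hψi : CircleIntegrable ψ z ρ := hψ.circleIntegrable hρ.le
  have hφi : CircleIntegrable (fun w => φ w + ε / 3 * ρ ^ 2) z ρ :=
    ContinuousOn.circleIntegrable hρ.le (by fun_prop)
  have hua := huρ ψ hψ fun w hw => (hlt w hw).1.le
  have hva := hvρ (fun w => φ w + ε / 3 * ρ ^ 2 - ψ w) (by fun_prop) fun w hw => (hlt w hw).2.le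
  rw [Real.circleAverage_fun_sub hφi hψi, Real.circleAverage_fun_add
    (hφ.circleIntegrable hρ.le) (circleIntegrable_const _ _ _), Real.circleAverage_const] at hva
  refine (add_le_add hua hva).trans (le_of_eq ?_)
  rw [← EReal.coe_add]
  congr 1
  ring

theorem le_coe_sub_of_add_coe_le {a : EReal} {b m : ℝ} (h : a + (b : EReal) ≤ m) :
    a ≤ ((m - b : ℝ) : EReal) := by
  rw [EReal.coe_sub]
  exact EReal.le_sub_iff_add_le (by simp) (by simp) |>.2 h

theorem SubmeanAt.eq_bot_of_isLocalMax {v : ℂ → EReal} {z : ℂ} {δ : ℝ} (hv : SubmeanAt v z)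
    (hvz : v z < ⊤) (hδ : 0 < δ)
    (hmax : IsLocalMax (fun w => v w + ((δ * ‖w‖ ^ 2 : ℝ) : EReal)) z) : v z = ⊥ := by
  by_contra hbot
  lift v z to ℝ using ⟨hvz.ne, hbot⟩ with x hx
  obtain ⟨ρ, hvρ, hmaxρ, hρ⟩ := ((hv (δ / 2) (by positivity)).and
    ((eventually_nhdsGT_closedBall_subset hmax).and eventually_mem_nhdsWithin)).exists
  have hρ : 0 < ρ := hρ
  have hle := hvρ (fun w => x + δ * ‖z‖ ^ 2 - δ * ‖w - 0‖ ^ 2) (by fun_prop) fun w hw => by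
    have := hmaxρ (sphere_subset_closedBall hw)
    simp only [mem_ofPred_eq, ← hx] at this
    simpa using le_coe_sub_of_add_coe_le (this.trans_eq (EReal.coe_add _ _).symm)
  have hsmul := Real.circleAverage_fun_smul (a := δ) (f := fun w => ‖w - 0‖ ^ 2) (c := z) (R := ρ)
  simp only [smul_eq_mul] at hsmul
  rw [Real.circleAverage_fun_sub (ContinuousOn.circleIntegrable' (by fun_prop))
    (ContinuousOn.circleIntegrable' (by fun_prop)), Real.circleAverage_const, hsmul,
    circleAverage_norm_sub_sq 0 z hρ, sub_zero, ← hx, EReal.coe_le_coe_iff] at hle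
  have : 0 < δ * ρ ^ 2 := by positivity
  linarith

theorem le_of_submeanAt {C W : Set ℂ} (hC : IsCompact C) (hW : IsOpen W) (hWC : W ⊆ C)
    {v : ℂ → EReal} {m : ℝ} (hv : UpperSemicontinuousOn v C) (hvt : ∀ z ∈ C, v z < ⊤)
    (hvW : ∀ z ∈ W, SubmeanAt v z) (hvm : ∀ z ∈ C \ W, v z ≤ m) {z : ℂ} (hz : z ∈ C) :
    v z ≤ m := by
  obtain ⟨B, hB⟩ := hC.isBounded.exists_norm_le
  have hperturbed : ∀ δ > 0, v z ≤ ((m + δ * B ^ 2 : ℝ) : EReal) := by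
    intro δ hδ
    obtain ⟨w, hw, hmax⟩ := (upperSemicontinuousOn_add_coe (g := fun w => δ * ‖w‖ ^ 2) hv
      (by fun_prop)).exists_isMaxOn ⟨z, hz⟩ hC
    have hvw : v w ≤ m := by
      by_cases hwW : w ∈ W
      · rw [(hvW w hwW).eq_bot_of_isLocalMax (hvt w hw) hδ
          (hmax.isLocalMax (mem_of_superset (hW.mem_nhds hwW) hWC))]
        exact bot_le
      · exact hvm w ⟨hw, hwW⟩
    have hwB : δ * ‖w‖ ^ 2 ≤ δ * B ^ 2 := by gcongr; exact hB w hw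
    calc v z ≤ v z + ((δ * ‖z‖ ^ 2 : ℝ) : EReal) :=
          le_add_of_nonneg_right (by exact_mod_cast (by positivity : 0 ≤ δ * ‖z‖ ^ 2))
      _ ≤ v w + ((δ * ‖w‖ ^ 2 : ℝ) : EReal) := hmax hz
      _ ≤ m + ((δ * B ^ 2 : ℝ) : EReal) := add_le_add hvw (EReal.coe_le_coe_iff.2 hwB)
      _ = ((m + δ * B ^ 2 : ℝ) : EReal) := (EReal.coe_add _ _).symm
  have hlim : Tendsto (fun δ : ℝ => ((m + δ * B ^ 2 : ℝ) : EReal)) (𝓝[>] 0) (𝓝 (m : EReal)) := by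
    refine (continuous_coe_real_ereal.tendsto m).comp (tendsto_nhdsWithin_of_tendsto_nhds ?_)
    exact Continuous.tendsto' (by fun_prop) 0 m (by simp)
  exact ge_of_tendsto hlim (eventually_mem_nhdsWithin.mono hperturbed)

/-! ### Subharmonic functions -/

theorem subharmonicOn_of_submeanAt {v : ℂ → EReal} {V : Set ℂ} (hv : UpperSemicontinuousOn v V)
    (hvt : ∀ z ∈ V, v z < ⊤) (hvV : ∀ z ∈ interior V, SubmeanAt v z) : SubharmonicOn v V := by
  refine ⟨hv, hvt, fun c r _ hc h hh hvh z hz => ?_⟩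
  have hsub : ∀ z ∈ closedBall c r, v z + ((0 - h z : ℝ) : EReal) ≤ (0 : ℝ) := by
    refine fun z hz => le_of_submeanAt (isCompact_closedBall c r) isOpen_ball ball_subset_closedBall
      (upperSemicontinuousOn_add_coe (hv.mono hc) (continuousOn_const.sub hh.1))
      (fun w hw => EReal.add_lt_top (hvt w (hc hw)).ne (EReal.coe_ne_top _)) (fun w hw => ?_)
      (fun w hw => ?_) hz
    · have hball := isOpen_ball.mem_nhds hw
      have hwV : w ∈ interior V :=
        interior_maximal (ball_subset_closedBall.trans hc) isOpen_ball hw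
      exact (hvV w hwV).add hball (hv.mono (ball_subset_closedBall.trans hc))
        (upperSemicontinuousOn_coe (continuousOn_const.sub (hh.1.mono ball_subset_closedBall)))
        (fun w hw => hvt w (hc (ball_subset_closedBall hw))) (fun _ _ => EReal.coe_lt_top _)
        ((((HarmonicMVP.const 0).sub hh).mono ball_subset_closedBall).submeanAt hball)
    · rw [closedBall_sdiff_ball] at hw
      calc v w + ((0 - h w : ℝ) : EReal) ≤ h w + ((0 - h w : ℝ) : EReal) := by
            gcongr; exact hvh w hw
        _ = (0 : ℝ) := by norm_cast; ring
  simpa using le_coe_sub_of_add_coe_le (hsub z (ball_subset_closedBall hz))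

theorem HarmonicMVP.le_of_le_on_sphere {g h : ℂ → ℝ} {c : ℂ} {r : ℝ}
    (hg : HarmonicMVP g (closedBall c r)) (hh : HarmonicMVP h (closedBall c r))
    (hgh : ∀ z ∈ sphere c r, g z ≤ h z) {z : ℂ} (hz : z ∈ closedBall c r) : g z ≤ h z := by
  have hd := hg.sub hh
  have := le_of_submeanAt (m := 0) (isCompact_closedBall c r) isOpen_ball ball_subset_closedBall
    (upperSemicontinuousOn_coe hd.1) (fun _ _ => EReal.coe_lt_top _)
    (fun w hw => (hd.mono ball_subset_closedBall).submeanAt (isOpen_ball.mem_nhds hw))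
    (fun w hw => ?_) hz
  · exact sub_nonpos.1 (EReal.coe_le_coe_iff.1 this)
  · rw [closedBall_sdiff_ball] at hw
    exact EReal.coe_le_coe_iff.2 (sub_nonpos.2 (hgh w hw))

namespace SubharmonicOn

variable {u v : ℂ → EReal} {U V : Set ℂ}

theorem mono (hu : SubharmonicOn u U) (hVU : V ⊆ U) : SubharmonicOn u V :=
  ⟨hu.1.mono hVU, fun z hz => hu.2.1 z (hVU hz), fun c r hr hc => hu.2.2 c r hr (hc.trans hVU)⟩

theorem congr (hu : SubharmonicOn u U) (huv : EqOn u v U) : SubharmonicOn v U := by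
  refine ⟨fun z hz y hy => ?_, fun z hz => huv hz ▸ hu.2.1 z hz, fun c r hr hc h hh hvh z hz => ?_⟩
  · filter_upwards [hu.1 z hz y ((huv hz).trans_lt hy), self_mem_nhdsWithin] with w hw hwU
    exact (huv hwU).symm.trans_lt hw
  · rw [← huv (hc (ball_subset_closedBall hz))]
    refine hu.2.2 c r hr hc h hh (fun w hw => ?_) z hz
    rw [huv (hc (sphere_subset_closedBall hw))]
    exact hvh w hw

theorem sup (hu : SubharmonicOn u U) (hv : SubharmonicOn v U) :
    SubharmonicOn (fun z => u z ⊔ v z) U :=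
  ⟨hu.1.sup hv.1, fun z hz => max_lt (hu.2.1 z hz) (hv.2.1 z hz), fun c r hr hc h hh huvh z hz =>
    max_le (hu.2.2 c r hr hc h hh (fun w hw => (le_max_left _ _).trans (huvh w hw)) z hz)
      (hv.2.2 c r hr hc h hh (fun w hw => (le_max_right _ _).trans (huvh w hw)) z hz)⟩

end SubharmonicOn

/-! ### Approximate solution of the Dirichlet problem on a disc -/

/-- On the circle, `fourier n` is `((z - c) / r) ^ n`, whose conjugate is `fourier (-n)`. -/
theorem exists_differentiable_add_conj_of_mem_span_fourier (c : ℂ) {r : ℝ} (hr : 0 < r)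
    {g : C(AddCircle (2 * Real.pi), ℂ)}
    (hg : g ∈ Submodule.span ℂ (range (@fourier (2 * Real.pi)))) :
    ∃ p q : ℂ → ℂ, Differentiable ℂ p ∧ Differentiable ℂ q ∧
      ∀ θ : ℝ, g (θ : AddCircle (2 * Real.pi)) = p (circleMap c r θ) +
        starRingEnd ℂ (q (circleMap c r θ)) := by
  have hcircle : ∀ θ : ℝ, (circleMap c r θ - c) / r = Complex.exp (θ * Complex.I) := by
    intro θ
    have : (r : ℂ) ≠ 0 := by exact_mod_cast hr.ne'
    simp [circleMap, this]
  have hfourier : ∀ (n : ℤ) (θ : ℝ),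
      fourier n (θ : AddCircle (2 * Real.pi)) = Complex.exp (n * (θ * Complex.I)) := by
    intro n θ
    rw [fourier_coe_apply]
    congr 1
    push_cast
    field_simp
  induction hg using Submodule.span_induction with
  | mem x hx =>
    obtain ⟨n, rfl⟩ := hx
    rcases Int.eq_nat_or_neg n with ⟨m, rfl | rfl⟩
    · refine ⟨fun z => ((z - c) / r) ^ m, fun _ => 0, by fun_prop, by fun_prop, fun θ => ?_⟩
      simp only [hfourier, hcircle, ← Complex.exp_nat_mul]
      simp
    · refine ⟨fun _ => 0, fun z => ((z - c) / r) ^ m, by fun_prop, by fun_prop, fun θ => ?_⟩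
      simp only [hfourier, hcircle, ← Complex.exp_nat_mul, ← Complex.exp_conj]
      simp
  | zero => exact ⟨fun _ => 0, fun _ => 0, by fun_prop, by fun_prop, by simp⟩
  | add x y _ _ hx hy =>
    obtain ⟨p, q, hp, hq, h⟩ := hx
    obtain ⟨p', q', hp', hq', h'⟩ := hy
    refine ⟨fun z => p z + p' z, fun z => q z + q' z, by fun_prop, by fun_prop, fun θ => ?_⟩
    simp only [ContinuousMap.add_apply, h, h', map_add]
    ring
  | smul a x _ hx =>
    obtain ⟨p, q, hp, hq, h⟩ := hx
    refine ⟨fun z => a * p z, fun z => starRingEnd ℂ a * q z, by fun_prop, by fun_prop,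
      fun θ => ?_⟩
    simp only [ContinuousMap.smul_apply, smul_eq_mul, h, map_mul, Complex.conj_conj]
    ring

theorem exists_differentiable_abs_re_sub_lt (c : ℂ) {r : ℝ} (hr : 0 < r) {φ : ℂ → ℝ}
    (hφ : ContinuousOn φ (sphere c r)) {ε : ℝ} (hε : 0 < ε) :
    ∃ F : ℂ → ℂ, Differentiable ℂ F ∧ ∀ z ∈ sphere c r, |(F z).re - φ z| < ε := by
  have : Fact (0 < 2 * Real.pi) := ⟨Real.two_pi_pos⟩
  have hcont : Continuous fun θ : ℝ => ((φ (circleMap c r θ) : ℝ) : ℂ) :=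
    Complex.continuous_ofReal.comp <| hφ.comp_continuous (continuous_circleMap c r)
      (circleMap_mem_sphere c hr.le)
  have hper : Function.Periodic (fun θ : ℝ => ((φ (circleMap c r θ) : ℝ) : ℂ)) (2 * Real.pi) :=
    fun θ => by simp only [periodic_circleMap c r θ]
  let ψ : C(AddCircle (2 * Real.pi), ℂ) := ⟨hper.lift, continuous_coinduced_dom.2 hcont⟩
  have hψ : ψ ∈ (Submodule.span ℂ (range (@fourier (2 * Real.pi)))).topologicalClosure :=
    span_fourier_closure_eq_top (T := 2 * Real.pi) ▸ Submodule.mem_top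
  obtain ⟨g, hg, hgψ⟩ := Metric.mem_closure_iff.1 hψ ε hε
  obtain ⟨p, q, hp, hq, hpq⟩ := exists_differentiable_add_conj_of_mem_span_fourier c hr hg
  refine ⟨fun z => p z + q z, by fun_prop, fun z hz => ?_⟩
  obtain ⟨θ, rfl⟩ : z ∈ range (circleMap c r) := by rwa [range_circleMap, abs_of_pos hr]
  have hdist : dist (ψ (θ : AddCircle (2 * Real.pi))) (g θ) < ε :=
    (ContinuousMap.dist_apply_le_dist _).trans_lt hgψ
  rw [hpq, dist_comm, dist_eq_norm] at hdist
  change ‖_ - ((φ (circleMap c r θ) : ℝ) : ℂ)‖ < ε at hdist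
  simpa using (Complex.abs_re_le_norm _).trans_lt hdist

theorem exists_differentiable_lt_re_lt (c : ℂ) {r : ℝ} (hr : 0 < r) {u : ℂ → EReal} {k : ℂ → ℝ}
    (hu : UpperSemicontinuousOn u (sphere c r)) (hk : ContinuousOn k (sphere c r))
    (huk : ∀ z ∈ sphere c r, u z < k z) :
    ∃ F : ℂ → ℂ, Differentiable ℂ F ∧ ∀ z ∈ sphere c r, u z < (F z).re ∧ (F z).re < k z := by
  obtain ⟨φ, hφ, hlt⟩ := exists_continuousOn_lt_and_lt_sub (v := fun _ => ((0 : ℝ) : EReal)) hu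
    (upperSemicontinuousOn_coe continuousOn_const)
    (fun z hz => (huk z hz).trans (EReal.coe_lt_top _)) (fun _ _ => EReal.coe_lt_top _)
    hk (by simpa using huk)
  obtain ⟨ε, hε, hgap⟩ := (isCompact_sphere c r).exists_forall_le' (hk.sub hφ)
    fun z hz => EReal.coe_lt_coe_iff.1 (hlt z hz).2
  obtain ⟨F, hF, hFφ⟩ := exists_differentiable_abs_re_sub_lt c hr hφ (half_pos hε)
  refine ⟨fun z => F z + ((ε / 2 : ℝ) : ℂ), by fun_prop, fun z hz => ?_⟩
  have hFz := abs_lt.1 (hFφ z hz)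
  have hkz : ε ≤ k z - φ z := hgap z hz
  rw [Complex.add_re, Complex.ofReal_re]
  exact ⟨(hlt z hz).1.trans (EReal.coe_lt_coe_iff.2 (by linarith)), by linarith⟩

namespace SubharmonicOn

variable {u v : ℂ → EReal} {U V : Set ℂ} {c z : ℂ} {r : ℝ}

theorem le_circleAverage (hr : 0 < r) (hu : SubharmonicOn u (closedBall c r)) {φ : ℂ → ℝ}
    (hφ : ContinuousOn φ (sphere c r)) (huφ : ∀ z ∈ sphere c r, u z ≤ φ z) :
    u c ≤ Real.circleAverage φ c r := by
  refine EReal.le_of_forall_lt_iff_le.1 fun y hy => ?_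
  obtain ⟨ε, hε, hy⟩ : ∃ ε > 0, Real.circleAverage φ c r + ε = y :=
    ⟨y - Real.circleAverage φ c r, sub_pos.2 (EReal.coe_lt_coe_iff.1 hy), by ring⟩
  obtain ⟨F, hF, hFφ⟩ := exists_differentiable_lt_re_lt c hr (k := fun z => φ z + ε)
    (hu.1.mono sphere_subset_closedBall) (hφ.add continuousOn_const)
    fun z hz => (huφ z hz).trans_lt (EReal.coe_lt_coe_iff.2 (lt_add_of_pos_right _ hε))
  have hFh := harmonicMVP_re (hF.differentiableOn (s := closedBall c r))
  refine (hu.2.2 c r hr le_rfl _ hFh (fun z hz => (hFφ z hz).1.le) c (mem_ball_self hr)).trans ?_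
  rw [EReal.coe_le_coe_iff, ← hFh.circleAverage_eq hr le_rfl, ← hy,
    ← Real.circleAverage_const ε c r, ← Real.circleAverage_fun_add (hφ.circleIntegrable hr.le)
    (circleIntegrable_const _ _ _)]
  refine Real.circleAverage_mono (hFh.circleIntegrable hr le_rfl)
    (ContinuousOn.circleIntegrable hr.le (by fun_prop)) fun z hz => ?_
  rw [abs_of_pos hr] at hz
  exact (hFφ z hz).2.le

theorem submeanAt (hu : SubharmonicOn u V) (hV : V ∈ 𝓝 z) : SubmeanAt u z := by
  intro ε hε
  filter_upwards [eventually_nhdsGT_closedBall_subset hV, self_mem_nhdsWithin]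
    with ρ hρV (hρ : 0 < ρ) φ hφ huφ
  refine ((hu.mono hρV).le_circleAverage hρ hφ huφ).trans (EReal.coe_le_coe_iff.2 ?_)
  exact le_add_of_nonneg_right (by positivity)

theorem add (hu : SubharmonicOn u U) (hv : SubharmonicOn v U) :
    SubharmonicOn (fun z => u z + v z) U :=
  subharmonicOn_of_submeanAt (upperSemicontinuousOn_add hu.1 hv.1 hu.2.1 hv.2.1)
    (fun z hz => EReal.add_lt_top (hu.2.1 z hz).ne (hv.2.1 z hz).ne) fun _ hz =>
    have hU := mem_interior_iff_mem_nhds.1 hz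
    (hu.submeanAt hU).add hU hu.1 hv.1 hu.2.1 hv.2.1 (hv.submeanAt hU)

end SubharmonicOn

theorem subharmonicOn_of_locally {u : ℂ → EReal} {U : Set ℂ}
    (hu : ∀ z ∈ U, ∃ V ∈ 𝓝 z, SubharmonicOn u V) : SubharmonicOn u U := by
  refine subharmonicOn_of_submeanAt (fun z hz => ?_) (fun z hz => ?_) fun z hz => ?_
  · obtain ⟨V, hV, huV⟩ := hu z hz
    exact fun y hy => mem_nhdsWithin_of_mem_nhds <|
      nhdsWithin_eq_nhds.2 hV ▸ huV.1 z (mem_of_mem_nhds hV) y hy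
  · obtain ⟨V, hV, huV⟩ := hu z hz
    exact huV.2.1 z (mem_of_mem_nhds hV)
  · obtain ⟨V, hV, huV⟩ := hu z (interior_subset hz)
    exact huV.submeanAt hV

theorem HarmonicMVP.subharmonicOn {h : ℂ → ℝ} {s : Set ℂ} (hh : HarmonicMVP h s) :
    SubharmonicOn (fun z => (h z : EReal)) s :=
  subharmonicOn_of_submeanAt (upperSemicontinuousOn_coe hh.1) (fun _ _ => EReal.coe_lt_top _)
    fun _ hz => hh.submeanAt (mem_interior_iff_mem_nhds.1 hz)

theorem subharmonicOn_const (a : ℝ) (s : Set ℂ) : SubharmonicOn (fun _ => (a : EReal)) s :=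
  (HarmonicMVP.const a).subharmonicOn

theorem SubharmonicOn.mul_const {u : ℂ → EReal} {U : Set ℂ} (hu : SubharmonicOn u U) {a : ℝ}
    (ha : 0 < a) : SubharmonicOn (fun z => u z * a) U := by
  have ha' : (0 : EReal) < a := EReal.coe_pos.2 ha
  have hlt : ∀ {x y : EReal}, x * a < y ↔ x < y / a :=
    (EReal.lt_div_iff ha' (EReal.coe_ne_top a)).symm
  have hle : ∀ {x : EReal} {y : ℝ}, x * a ≤ y ↔ x ≤ ((a⁻¹ * y : ℝ) : EReal) := fun {x y} => by
    rw [← EReal.le_div_iff_mul_le ha' (EReal.coe_ne_top a), ← EReal.coe_div, div_eq_inv_mul]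
  refine ⟨fun z hz y hy => ?_, fun z hz => ?_, fun c r hr hc h hh huh z hz => ?_⟩
  · filter_upwards [hu.1 z hz (y / a) (hlt.1 hy)] with w hw using hlt.2 hw
  · rw [hlt, EReal.top_div_of_pos_ne_top ha' (EReal.coe_ne_top a)]
    exact hu.2.1 z hz
  · exact hle.2 <| hu.2.2 c r hr hc _ (hh.const_mul a⁻¹) (fun w hw => hle.1 (huh w hw)) z hz

/-! ### Directed infima -/

theorem exists_forall_lt_of_directed {X ι : Type*} [TopologicalSpace X] [Nonempty ι] {K : Set X}
    (hK : IsCompact K) {v : ι → X → EReal} (hv : ∀ i, UpperSemicontinuousOn (v i) K)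
    (hdir : ∀ i j, ∃ l, ∀ x ∈ K, v l x ≤ v i x ∧ v l x ≤ v j x) {k : X → ℝ}
    (hk : ContinuousOn k K) (hvk : ∀ x ∈ K, ∃ i, v i x < k x) : ∃ i, ∀ x ∈ K, v i x < k x := by
  suffices ∃ i, ∀ x ∈ K ∩ K, v i x < k x by simpa
  refine hK.induction_on (p := fun s => ∃ i, ∀ x ∈ s ∩ K, v i x < k x) ?_ ?_ ?_ ?_
  · exact ⟨Classical.arbitrary ι, by simp⟩
  · rintro s t hst ⟨i, hi⟩
    exact ⟨i, fun x hx => hi x ⟨hst hx.1, hx.2⟩⟩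
  · rintro s t ⟨i, hi⟩ ⟨j, hj⟩
    obtain ⟨l, hl⟩ := hdir i j
    refine ⟨l, ?_⟩
    rintro x ⟨hx | hx, hxK⟩
    · exact (hl x hxK).1.trans_lt (hi x ⟨hx, hxK⟩)
    · exact (hl x hxK).2.trans_lt (hj x ⟨hx, hxK⟩)
  · intro x hx
    obtain ⟨i, hi⟩ := hvk x hx
    obtain ⟨a, hva, hak⟩ := EReal.lt_iff_exists_real_btwn.1 hi
    refine ⟨_, inter_mem ((hv i x hx a hva).and <|
      (hk x hx).eventually (lt_mem_nhds (EReal.coe_lt_coe_iff.1 hak))) self_mem_nhdsWithin, i, ?_⟩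
    exact fun y hy => hy.1.1.1.trans (EReal.coe_lt_coe_iff.2 hy.1.1.2)

theorem SubharmonicOn.iInf_of_directed {ι : Type*} [Nonempty ι] {v : ι → ℂ → EReal} {V : Set ℂ}
    (hv : ∀ i, SubharmonicOn (v i) V)
    (hdir : ∀ i j, ∃ l, ∀ z ∈ V, v l z ≤ v i z ∧ v l z ≤ v j z) :
    SubharmonicOn (fun z => ⨅ i, v i z) V := by
  refine ⟨upperSemicontinuousOn_iInf fun i => (hv i).1, fun z hz =>
    (iInf_le _ (Classical.arbitrary ι)).trans_lt ((hv _).2.1 z hz),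
    fun c r hr hc h hh hvh z hz => ?_⟩
  refine EReal.le_of_forall_lt_iff_le.1 fun y hy => ?_
  obtain ⟨ε, hε, rfl⟩ : ∃ ε > 0, h z + ε = y :=
    ⟨y - h z, sub_pos.2 (EReal.coe_lt_coe_iff.1 hy), by ring⟩
  have hSV : sphere c r ⊆ V := sphere_subset_closedBall.trans hc
  obtain ⟨i, hi⟩ := exists_forall_lt_of_directed (isCompact_sphere c r)
    (fun i => (hv i).1.mono hSV) (fun i j => (hdir i j).imp fun l hl x hx => hl x (hSV hx))
    ((hh.1.mono sphere_subset_closedBall).add continuousOn_const) fun w hw =>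
      iInf_lt_iff.1 ((hvh w hw).trans_lt (EReal.coe_lt_coe_iff.2 (lt_add_of_pos_right _ hε)))
  exact (iInf_le _ i).trans <|
    (hv i).2.2 c r hr hc _ (hh.add (HarmonicMVP.const ε)) (fun w hw => (hi w hw).le) z hz

/-! ### Composition of plurisubharmonic functions with holomorphic curves -/

/-- The sup-convolution of `φ` over `C` with the paraboloid `-k * dist x y ^ 2`. As `k` grows these
regularisations decrease to `φ`, and each of them is touched from below by a translate of `φ` minus
a paraboloid, so it inherits inequalities that `φ` satisfies at points of `C`. -/
def supConv {X : Type*} [PseudoMetricSpace X] (φ : X → EReal) (C : Set X) (k : ℝ) (y : X) : EReal :=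
  ⨆ x ∈ C, φ x + ((-(k * dist x y ^ 2) : ℝ) : EReal)

section SupConv

variable {X : Type*} [PseudoMetricSpace X] {φ : X → EReal} {C : Set X} {k m M R : ℝ} {x y : X}

theorem le_supConv (hx : x ∈ C) : φ x + ((-(k * dist x y ^ 2) : ℝ) : EReal) ≤ supConv φ C k y :=
  le_iSup₂_of_le x hx le_rfl

theorem self_le_supConv (hy : y ∈ C) : φ y ≤ supConv φ C k y := by
  simpa using le_supConv (φ := φ) (k := k) (y := y) hy

theorem antitone_supConv : Antitone fun k => supConv φ C k y := by
  intro k l hkl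
  refine iSup₂_mono fun x _ => ?_
  gcongr

theorem exists_supConv_eq (hC : IsCompact C) (hne : C.Nonempty) (hφ : UpperSemicontinuousOn φ C) :
    ∃ x ∈ C, supConv φ C k y = φ x + ((-(k * dist x y ^ 2) : ℝ) : EReal) := by
  obtain ⟨x, hx, hmax⟩ := (upperSemicontinuousOn_add_coe (g := fun x => -(k * dist x y ^ 2)) hφ
    (by fun_prop)).exists_isMaxOn hne hC
  exact ⟨x, hx, le_antisymm (iSup₂_le fun w hw => hmax hw) (le_supConv hx)⟩

theorem supConv_lt_iff (hC : IsCompact C) (hne : C.Nonempty) (hφ : UpperSemicontinuousOn φ C)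
    {a : EReal} :
    supConv φ C k y < a ↔ ∀ x ∈ C, φ x + ((-(k * dist x y ^ 2) : ℝ) : EReal) < a := by
  refine ⟨fun h x hx => (le_supConv hx).trans_lt h, fun h => ?_⟩
  obtain ⟨x, hx, hxy⟩ := exists_supConv_eq (k := k) (y := y) hC hne hφ
  exact hxy ▸ h x hx

theorem upperSemicontinuousOn_supConv (hC : IsCompact C) (hne : C.Nonempty)
    (hφ : UpperSemicontinuousOn φ C) (s : Set X) : UpperSemicontinuousOn (supConv φ C k) s := by
  intro y _ a ha
  refine mem_nhdsWithin_of_mem_nhds ?_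
  have hjoint : UpperSemicontinuousOn
      (fun p : X × X => φ p.2 + ((-(k * dist p.2 p.1 ^ 2) : ℝ) : EReal)) (univ ×ˢ C) :=
    upperSemicontinuousOn_add_coe (hφ.comp continuousOn_snd fun p hp => hp.2)
      (by fun_prop)
  have hall : ∀ᶠ w in 𝓝 y, ∀ x ∈ C, x ∈ C → φ x + ((-(k * dist x w ^ 2) : ℝ) : EReal) < a := by
    refine hC.eventually_forall_of_forall_eventually fun x hx => ?_
    have := hjoint (y, x) ⟨mem_univ _, hx⟩ a ((supConv_lt_iff hC hne hφ).1 ha x hx)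
    filter_upwards [eventually_nhdsWithin_iff.1 this] with p hp hpC using hp ⟨mem_univ _, hpC⟩
  exact hall.mono fun w hw => (supConv_lt_iff hC hne hφ).2 fun x hx => hw x hx hx

theorem dist_lt_of_supConv_eq (hR : 0 ≤ R) (hk : M + m < k * R ^ 2) (hy : y ∈ C)
    (hφy : ((-m : ℝ) : EReal) ≤ φ y) (hφx : φ x ≤ M)
    (hx : supConv φ C k y = φ x + ((-(k * dist x y ^ 2) : ℝ) : EReal)) (hk0 : 0 ≤ k) :
    dist x y < R := by
  have hle : ((-m : ℝ) : EReal) ≤ ((M - k * dist x y ^ 2 : ℝ) : EReal) :=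
    calc ((-m : ℝ) : EReal) ≤ supConv φ C k y := hφy.trans (self_le_supConv hy)
      _ ≤ M + ((-(k * dist x y ^ 2) : ℝ) : EReal) := by rw [hx]; gcongr
      _ = ((M - k * dist x y ^ 2 : ℝ) : EReal) := by rw [← EReal.coe_add, sub_eq_add_neg]
  rw [EReal.coe_le_coe_iff] at hle
  by_contra! hRx
  have : k * R ^ 2 ≤ k * dist x y ^ 2 := by gcongr
  linarith

theorem exists_supConv_le (hφM : ∀ x ∈ C, φ x ≤ M) (hφ : UpperSemicontinuousOn φ C) (hy : y ∈ C)
    {a : ℝ} (ha : φ y < a) : ∃ k₀ : ℝ, ∀ k ≥ k₀, supConv φ C k y ≤ a := by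
  obtain ⟨δ, hδ, hball⟩ := Metric.mem_nhdsWithin_iff.1 (hφ y hy a ha)
  refine ⟨max 0 ((M - a) / δ ^ 2), fun k hk => iSup₂_le fun x hx => ?_⟩
  obtain ⟨hk0, hkδ⟩ := max_le_iff.1 hk
  rcases lt_or_ge (dist x y) δ with hxy | hxy
  · refine (add_le_add (le_of_lt (hball ⟨hxy, hx⟩)) (EReal.coe_le_coe_iff.2 ?_)).trans
      (add_zero _).le
    exact neg_nonpos.2 (by positivity)
  · refine (add_le_add_left (hφM x hx) _).trans ?_
    rw [div_le_iff₀ (by positivity)] at hkδ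
    have : k * δ ^ 2 ≤ k * dist x y ^ 2 := by gcongr
    rw [← EReal.coe_add, EReal.coe_le_coe_iff]
    linarith

theorem iInf_supConv_eq (hφM : ∀ x ∈ C, φ x ≤ M) (hφ : UpperSemicontinuousOn φ C) (hy : y ∈ C) :
    ⨅ n : ℕ, supConv φ C (k + n) y = φ y := by
  refine le_antisymm (EReal.le_of_forall_lt_iff_le.1 fun a ha => ?_)
    (le_iInf fun n => self_le_supConv hy)
  obtain ⟨k₀, hk₀⟩ := exists_supConv_le hφM hφ hy ha
  obtain ⟨n, hn⟩ := exists_nat_ge (k₀ - k)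
  exact iInf_le_of_le n (hk₀ _ (by linarith))

end SupConv

section Composition

variable {E : Type*} [NormedAddCommGroup E] [InnerProductSpace ℂ E]

theorem submeanAt_neg_const_mul_norm_sq {P : ℂ → E} {z : ℂ} {s : Set ℂ} (hs : s ∈ 𝓝 z)
    (hP : DifferentiableOn ℂ P s) (hPz : HasDerivAt P 0 z) {k : ℝ} (hk : 0 ≤ k) :
    SubmeanAt (fun w => ((-(k * ‖P w‖ ^ 2) : ℝ) : EReal)) z := by
  have hsmall := eventually_nhdsGT_closedBall_subset hs
  refine submeanAt_coe ?_ fun ε hε => ?_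
  · filter_upwards [hsmall, self_mem_nhdsWithin] with ρ hρs (hρ : 0 < ρ)
    have := hP.continuousOn.mono (sphere_subset_closedBall.trans hρs)
    exact ContinuousOn.circleIntegrable hρ.le (by fun_prop)
  have hη : 0 < √(ε / (k + 1)) := by positivity
  have hlittle : ∀ᶠ w in 𝓝 z, ‖P w - P z‖ ≤ √(ε / (k + 1)) * ‖w - z‖ := by
    simpa using (hasDerivAt_iff_isLittleO.1 hPz).def hη
  filter_upwards [hsmall, eventually_nhdsGT_closedBall_subset hlittle, self_mem_nhdsWithin]
    with ρ hρs hρP (hρ : 0 < ρ)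
  have hPρ := hP.mono hρs
  have hPc := hPρ.continuousOn.mono sphere_subset_closedBall
  have havg : Real.circleAverage (fun w => ‖P w - P z‖ ^ 2) z ρ ≤ ε / (k + 1) * ρ ^ 2 := by
    refine Real.circleAverage_mono_on_of_le_circle
      (ContinuousOn.circleIntegrable hρ.le (by fun_prop)) fun w hw => ?_
    rw [abs_of_pos hρ] at hw
    rw [← Real.sq_sqrt (by positivity : 0 ≤ ε / (k + 1)), ← mul_pow, ← mem_sphere_iff_norm.1 hw]
    gcongr
    exact hρP (sphere_subset_closedBall hw)
  have hsmul := Real.circleAverage_fun_smul (a := -k) (f := fun w => ‖P w‖ ^ 2) (c := z) (R := ρ)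
  simp only [smul_eq_mul, neg_mul] at hsmul
  rw [hsmul, circleAverage_norm_sq hρ hPρ]
  have hkε : k * (ε / (k + 1) * ρ ^ 2) ≤ ε * ρ ^ 2 := by
    rw [← mul_assoc, mul_div_assoc', div_mul_eq_mul_div, div_le_iff₀ (by positivity)]
    nlinarith [mul_pos hε (pow_pos hρ 2)]
  linarith [mul_le_mul_of_nonneg_left havg hk]

variable {Ω C : Set E} {φ : E → EReal} {f : ℂ → E} {U : Set ℂ} {z : ℂ} {k : ℝ}

/-- Near `z`, the curve `w ↦ x + (w - z) • f' z` follows `f` up to a translation and a second order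
error, so `φ` along this line minus a paraboloid touches the sup-convolution from below. -/
theorem submeanAt_supConv_comp (hφ : UpperSemicontinuousOn φ Ω) (hφt : ∀ x ∈ Ω, φ x < ⊤)
    (hline : ∀ a b : E, SubharmonicOn (fun z => φ (a + z • b)) {z | a + z • b ∈ Ω}) (hCΩ : C ⊆ Ω)
    (hU : U ∈ 𝓝 z) (hf : DifferentiableOn ℂ f U) (hk : 0 ≤ k) {x : E} (hx : x ∈ interior C)
    (hmax : supConv φ C k (f z) = φ x + ((-(k * dist x (f z) ^ 2) : ℝ) : EReal)) :
    SubmeanAt (fun w => supConv φ C k (f w)) z := by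
  set b := deriv f z
  set γ : ℂ → E := fun w => (x - z • b) + w • b with hγ
  have hγz : γ z = x := by simp [hγ]
  have hγc : Continuous γ := by fun_prop
  have hγC : γ ⁻¹' C ∈ 𝓝 z :=
    hγc.continuousAt.preimage_mem_nhds (hγz ▸ mem_interior_iff_mem_nhds.1 hx)
  have hV : γ ⁻¹' C ∩ U ∈ 𝓝 z := inter_mem hγC hU
  have hγ' : HasDerivAt γ b z :=
    (((hasDerivAt_id z).smul_const b).const_add (x - z • b)).congr_deriv (one_smul ℂ b)
  have hP : HasDerivAt (fun w => γ w - f w) 0 z :=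
    (hγ'.sub (hf.differentiableAt hU).hasDerivAt).congr_deriv (sub_self b)
  have hγd : Differentiable ℂ γ := by fun_prop
  have hPd := hγd.differentiableOn.sub (hf.mono (inter_subset_right (s := γ ⁻¹' C)))
  have hφγ : UpperSemicontinuousOn (fun w => φ (γ w)) (γ ⁻¹' C ∩ U) :=
    hφ.comp hγc.continuousOn fun w hw => hCΩ hw.1
  have hsum := ((hline (x - z • b) b).submeanAt (mem_of_superset hγC fun w hw => hCΩ hw)).add hV hφγ
    (upperSemicontinuousOn_coe (g := fun w => -(k * ‖γ w - f w‖ ^ 2))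
      ((hPd.continuousOn.norm.pow 2).const_mul k).neg)
    (fun w hw => hφt _ (hCΩ hw.1)) (fun _ _ => EReal.coe_lt_top _)
    (submeanAt_neg_const_mul_norm_sq hV hPd hP hk)
  refine hsum.of_le ?_ ?_
  · filter_upwards [hγC] with w hw
    rw [← dist_eq_norm]
    exact le_supConv hw
  · rw [← dist_eq_norm, hγz, hmax]

variable [ProperSpace E]

theorem subharmonicOn_supConv_comp (hφ : UpperSemicontinuousOn φ Ω) (hφt : ∀ x ∈ Ω, φ x < ⊤)
    (hline : ∀ a b : E, SubharmonicOn (fun z => φ (a + z • b)) {z | a + z • b ∈ Ω}) (hU : IsOpen U)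
    (hf : DifferentiableOn ℂ f U) {p : E} {R m M : ℝ} (hR : 0 ≤ R) (hΩ : closedBall p (2 * R) ⊆ Ω)
    (hfp : MapsTo f U (ball p R)) (hφm : ∀ x ∈ Ω, ((-m : ℝ) : EReal) ≤ φ x)
    (hφM : ∀ x ∈ closedBall p (2 * R), φ x ≤ M) (hk : 0 ≤ k) (hmM : M + m < k * R ^ 2) :
    SubharmonicOn (fun w => supConv φ (closedBall p (2 * R)) k (f w)) U := by
  have hC := isCompact_closedBall p (2 * R)
  have hne : (closedBall p (2 * R)).Nonempty := nonempty_closedBall.2 (by positivity)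
  have hφC := hφ.mono hΩ
  refine subharmonicOn_of_submeanAt ((upperSemicontinuousOn_supConv hC hne hφC univ).comp
    hf.continuousOn (mapsTo_univ f U)) (fun z _ => ?_) fun z hz => ?_
  · exact (supConv_lt_iff hC hne hφC).2 fun x hx =>
      EReal.add_lt_top (hφt x (hΩ hx)).ne (EReal.coe_ne_top _)
  · have hz := interior_subset hz
    have hfz : dist (f z) p < R := hfp hz
    have hfC : f z ∈ closedBall p (2 * R) := mem_closedBall.2 (by linarith)
    obtain ⟨x, hx, hmax⟩ := exists_supConv_eq (k := k) (y := f z) hC hne hφC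
    have hxz := dist_lt_of_supConv_eq hR hmM hfC (hφm _ (hΩ hfC)) (hφM x hx) hmax hk
    refine submeanAt_supConv_comp hφ hφt hline hΩ (hU.mem_nhds hz) hf hk
      (ball_subset_interior_closedBall ?_) hmax
    rw [mem_ball]
    linarith [dist_triangle x (f z) p]

theorem subharmonicOn_comp_of_forall_le (hΩ : IsOpen Ω) (hφ : UpperSemicontinuousOn φ Ω)
    (hφt : ∀ x ∈ Ω, φ x < ⊤)
    (hline : ∀ a b : E, SubharmonicOn (fun z => φ (a + z • b)) {z | a + z • b ∈ Ω}) {m : ℝ}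
    (hφm : ∀ x ∈ Ω, ((-m : ℝ) : EReal) ≤ φ x) (hU : IsOpen U) (hf : DifferentiableOn ℂ f U)
    (hfΩ : MapsTo f U Ω) : SubharmonicOn (fun z => φ (f z)) U := by
  refine subharmonicOn_of_locally fun z hz => ?_
  obtain ⟨r, hr, hrΩ⟩ := nhds_basis_closedBall.mem_iff.1 (hΩ.mem_nhds (hfΩ hz))
  obtain ⟨R, hR, rfl⟩ : ∃ R > 0, 2 * R = r := ⟨r / 2, by positivity, by ring⟩
  obtain ⟨M, hM⟩ := exists_real_forall_le_of_isCompact (isCompact_closedBall (f z) (2 * R))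
    (hφ.mono hrΩ) fun x hx => hφt x (hrΩ hx)
  obtain ⟨k, hk⟩ := exists_nat_gt ((M + m) / R ^ 2)
  rw [div_lt_iff₀ (by positivity)] at hk
  have hV : IsOpen (U ∩ f ⁻¹' ball (f z) R) := hf.continuousOn.isOpen_inter_preimage hU isOpen_ball
  refine ⟨_, hV.mem_nhds ⟨hz, mem_ball_self hR⟩, ?_⟩
  have hsub : ∀ n : ℕ, SubharmonicOn
      (fun w => supConv φ (closedBall (f z) (2 * R)) (k + n) (f w)) (U ∩ f ⁻¹' ball (f z) R) := by
    refine fun n => subharmonicOn_supConv_comp hφ hφt hline hV (hf.mono inter_subset_left) hR.le hrΩ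
      (fun w hw => hw.2) hφm hM (by positivity) (hk.trans_le ?_)
    gcongr
    exact le_add_of_nonneg_right n.cast_nonneg
  refine (SubharmonicOn.iInf_of_directed hsub fun i j => ⟨max i j, fun w _ =>
    ⟨antitone_supConv (by gcongr; exact le_max_left i j),
      antitone_supConv (by gcongr; exact le_max_right i j)⟩⟩).congr fun w hw => ?_
  exact iInf_supConv_eq hM (hφ.mono hrΩ)
    (ball_subset_closedBall (ball_subset_ball (by linarith) hw.2))

theorem iInf_max_neg_natCast (x : EReal) : ⨅ n : ℕ, max x ((-n : ℝ) : EReal) = x := by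
  refine le_antisymm (EReal.le_of_forall_lt_iff_le.1 fun a ha => ?_)
    (le_iInf fun n => le_max_left _ _)
  obtain ⟨n, hn⟩ := exists_nat_ge (-a)
  exact iInf_le_of_le n (max_le ha.le (EReal.coe_le_coe_iff.2 (by linarith)))

theorem subharmonicOn_comp (hΩ : IsOpen Ω) (hφ : UpperSemicontinuousOn φ Ω)
    (hline : ∀ a b : E, SubharmonicOn (fun z => φ (a + z • b)) {z | a + z • b ∈ Ω})
    (hU : IsOpen U) (hf : DifferentiableOn ℂ f U) (hfΩ : MapsTo f U Ω) :
    SubharmonicOn (fun z => φ (f z)) U := by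
  have hφt : ∀ x ∈ Ω, φ x < ⊤ := fun x hx => by simpa using (hline x 0).2.1 0 (by simpa using hx)
  have hmax (n : ℕ) : SubharmonicOn (fun z => max (φ (f z)) ((-n : ℝ) : EReal)) U :=
    subharmonicOn_comp_of_forall_le (φ := fun x => max (φ x) ((-n : ℝ) : EReal)) hΩ
      (hφ.sup (upperSemicontinuousOn_coe continuousOn_const))
      (fun x hx => max_lt (hφt x hx) (EReal.coe_lt_top _))
      (fun a b => (hline a b).sup (subharmonicOn_const _ _))
      (fun x _ => le_max_right _ _) hU hf hfΩ
  refine (SubharmonicOn.iInf_of_directed hmax fun i j => ⟨max i j, fun z _ => ⟨?_, ?_⟩⟩).congr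
    fun z _ => iInf_max_neg_natCast _
  all_goals
    gcongr
    simp

end Composition

theorem PlurisubharmonicOn.comp {n : ℕ} {φ : (Fin n → ℂ) → EReal} {Ω : Set (Fin n → ℂ)}
    (hφ : PlurisubharmonicOn φ Ω) (hΩ : IsOpen Ω) {f : ℂ → Fin n → ℂ} {U : Set ℂ} (hU : IsOpen U)
    (hf : DifferentiableOn ℂ f U) (hfΩ : MapsTo f U Ω) : SubharmonicOn (fun z => φ (f z)) U := by
  let e := EuclideanSpace.equiv (Fin n) ℂ
  have hφe : UpperSemicontinuousOn (fun x => φ (e x)) (e ⁻¹' Ω) :=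
    hφ.1.comp e.continuous.continuousOn (mapsTo_preimage e Ω)
  exact subharmonicOn_comp (f := fun z => e.symm (f z)) (hΩ.preimage e.continuous) hφe
    (fun a b => hφ.2 (e a) (e b)) hU (e.symm.differentiable.comp_differentiableOn hf) hfΩ

/-! ### The set where a subharmonic function is `-∞` -/

theorem circleAverage_pos_of_continuous {g : ℂ → ℝ} {c ζ : ℂ} {r : ℝ} (hg : Continuous g)
    (hg0 : ∀ z, 0 ≤ g z) (hζ : ζ ∈ sphere c r) (hgζ : 0 < g ζ) : 0 < Real.circleAverage g c r := by
  obtain ⟨θ, hθ, rfl⟩ : ζ ∈ circleMap c r '' Ioc 0 (2 * Real.pi) := by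
    rwa [image_circleMap_Ioc, abs_of_nonneg (nonneg_of_mem_sphere hζ)]
  refine mul_pos (inv_pos.2 Real.two_pi_pos) (intervalIntegral.integral_pos Real.two_pi_pos ?_
    (fun _ _ => hg0 _) ⟨θ, Ioc_subset_Icc_self hθ, hgζ⟩)
  exact (hg.comp (continuous_circleMap c r)).continuousOn

namespace SubharmonicOn

variable {u : ℂ → EReal}

/-- Compare with `M - N * g` for a bump `g ≥ 0` supported near `ζ`, and let `N → ∞`. -/
theorem eq_bot_of_eventually_eq_bot {c ζ : ℂ} {r : ℝ} (hr : 0 < r)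
    (hu : SubharmonicOn u (closedBall c r)) (hζ : ζ ∈ sphere c r) (hb : ∀ᶠ z in 𝓝 ζ, u z = ⊥) :
    u c = ⊥ := by
  obtain ⟨M, hM⟩ := exists_real_forall_le_of_isCompact (isCompact_closedBall c r) hu.1 hu.2.1
  obtain ⟨τ, hτ, hball⟩ := Metric.eventually_nhds_iff.1 hb
  set g : ℂ → ℝ := fun z => max 0 (τ - dist z ζ)
  have hg : Continuous g := by fun_prop
  have havg : 0 < Real.circleAverage g c r :=
    circleAverage_pos_of_continuous hg (fun z => le_max_left _ _) hζ (by simpa [g] using hτ)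
  have hbound (N : ℝ) : u c ≤ ((M - N * Real.circleAverage g c r : ℝ) : EReal) := by
    have hMN : Real.circleAverage (fun z => M - N * g z) c r =
        M - N * Real.circleAverage g c r := by
      rw [Real.circleAverage_fun_sub (by fun_prop) (hg.const_mul N).continuousOn.circleIntegrable',
        Real.circleAverage_const]
      exact congrArg (M - ·) (Real.circleAverage_fun_smul (a := N) (f := g))
    rw [← hMN]
    refine hu.le_circleAverage hr (by fun_prop) fun z hz => ?_
    rcases lt_or_ge (dist z ζ) τ with hzτ | hzτ
    · exact hball hzτ ▸ bot_le
    · simpa [g, hzτ] using hM z (sphere_subset_closedBall hz)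
  rw [EReal.eq_bot_iff_forall_lt]
  intro y
  refine (hbound ((M - y + 1) / Real.circleAverage g c r)).trans_lt (EReal.coe_lt_coe_iff.2 ?_)
  rw [div_mul_cancel₀ _ havg.ne']
  linarith

theorem forall_eq_bot_of_eventually_eq_bot {U : Set ℂ} (hU : IsOpen U) (hUc : IsPreconnected U)
    (hu : SubharmonicOn u U) {p : ℂ} (hp : p ∈ U) (hb : ∀ᶠ z in 𝓝 p, u z = ⊥) :
    ∀ z ∈ U, u z = ⊥ := by
  suffices U ⊆ {z | ∀ᶠ w in 𝓝 z, u w = ⊥} from fun z hz => (this hz).self_of_nhds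
  refine hUc.subset_of_closure_inter_subset isOpen_setOfPred_eventually_nhds ⟨p, hp, hb⟩ ?_
  rintro z ⟨hz, hzU⟩
  obtain ⟨ρ, hρ, hρU⟩ := Metric.isOpen_iff.1 hU z hzU
  obtain ⟨q, hq, hqz⟩ := Metric.mem_closure_iff.1 hz (ρ / 3) (by positivity)
  filter_upwards [ball_mem_nhds z (by positivity : 0 < ρ / 3)] with w hw
  rcases eq_or_ne w q with rfl | hwq
  · exact hq.self_of_nhds
  refine eq_bot_of_eventually_eq_bot (dist_pos.2 hwq) (hu.mono fun y hy => hρU ?_)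
    (mem_sphere'.2 rfl) hq
  rw [mem_closedBall] at hy
  rw [mem_ball] at hw ⊢
  linarith [dist_triangle y w z, dist_triangle_right w q z, dist_comm q z]

end SubharmonicOn

/-! ### Poisson modification -/

theorem harnack_le {h : ℂ → ℝ} {c z : ℂ} {R : ℝ}
    (hh : InnerProductSpace.HarmonicOnNhd h (closedBall c R)) (h0 : ∀ w ∈ sphere c R, 0 ≤ h w)
    (hz : z ∈ ball c R) : h z ≤ (R + ‖z - c‖) / (R - ‖z - c‖) * h c := by
  have hR : 0 < R := pos_of_mem_ball hz
  have hhc : ContinuousOn h (sphere c |R|) := by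
    rw [abs_of_pos hR]
    exact hh.continuousOn.mono sphere_subset_closedBall
  have hk : ContinuousOn (Complex.re ∘ herglotzRieszKernel c z) (sphere c |R|) :=
    Complex.continuous_re.comp_continuousOn (continuousOn_herglotzRieszKernel_sphere hz)
  set A := (R + ‖z - c‖) / (R - ‖z - c‖)
  calc h z = Real.circleAverage ((Complex.re ∘ herglotzRieszKernel c z) • h) c R :=
        (hh.circleAverage_re_herglotzRieszKernel_smul hz).symm
    _ ≤ Real.circleAverage (A • h) c R := by
        refine Real.circleAverage_mono (hk.smul hhc).circleIntegrable'
          (hhc.const_smul A).circleIntegrable' fun w hw => ?_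
        rw [abs_of_pos hR] at hw
        exact mul_le_mul_of_nonneg_right (re_herglotzRieszKernel_le hw hz) (h0 w hw)
    _ = A * h c := by
        rw [Real.circleAverage_smul, InnerProductSpace.HarmonicOnNhd.circleAverage_eq
          (by rwa [abs_of_pos hR]), smul_eq_mul]

theorem harmonicOnNhd_sub_re {F : ℂ → ℂ} (hF : Differentiable ℂ F) (M : ℝ) (s : Set ℂ) :
    InnerProductSpace.HarmonicOnNhd (fun z => M - (F z).re) s := fun z _ => by
  have : AnalyticAt ℂ (fun z => (M : ℂ) - F z) z :=
    (hF.const_sub (M : ℂ)).analyticAt z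
  simpa using this.harmonicAt_re

/-- The harmonic functions on the closed disc of centre `c` and radius `r` that strictly dominate
`u` on the boundary circle. Strictness makes the family directed downwards. -/
def harmonicMajorants (u : ℂ → EReal) (c : ℂ) (r : ℝ) : Set (ℂ → ℝ) :=
  {H | HarmonicMVP H (closedBall c r) ∧ ∀ z ∈ sphere c r, u z < H z}

open Classical in
/-- The Poisson modification of `u`, which replaces `u` in the disc of centre `c` and radius `r` by
the Perron-style infimum of its harmonic majorants. -/
def poissonMod (u : ℂ → EReal) (c : ℂ) (r : ℝ) (z : ℂ) : EReal :=
  if z ∈ ball c r then ⨅ H : harmonicMajorants u c r, ((H : ℂ → ℝ) z : EReal) else u z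

section PoissonMod

variable {u : ℂ → EReal} {V : Set ℂ} {c z : ℂ} {r M : ℝ}

theorem const_mem_harmonicMajorants (hM : ∀ z ∈ sphere c r, u z < M) :
    (fun _ => M) ∈ harmonicMajorants u c r :=
  ⟨HarmonicMVP.const M, hM⟩

theorem exists_re_mem_harmonicMajorants (hr : 0 < r) (hu : UpperSemicontinuousOn u (sphere c r))
    {k : ℂ → ℝ} (hk : ContinuousOn k (sphere c r)) (huk : ∀ z ∈ sphere c r, u z < k z) :
    ∃ F : ℂ → ℂ, Differentiable ℂ F ∧ (fun z => (F z).re) ∈ harmonicMajorants u c r ∧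
      ∀ z ∈ sphere c r, (F z).re < k z := by
  obtain ⟨F, hF, huF⟩ := exists_differentiable_lt_re_lt c hr hu hk huk
  exact ⟨F, hF, ⟨harmonicMVP_re hF.differentiableOn, fun z hz => (huF z hz).1⟩,
    fun z hz => (huF z hz).2⟩

theorem exists_re_mem_harmonicMajorants_le (hr : 0 < r)
    (hu : UpperSemicontinuousOn u (sphere c r)) {G H : ℂ → ℝ} (hG : G ∈ harmonicMajorants u c r)
    (hH : H ∈ harmonicMajorants u c r) :
    ∃ F : ℂ → ℂ, Differentiable ℂ F ∧ (fun z => (F z).re) ∈ harmonicMajorants u c r ∧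
      ∀ z ∈ closedBall c r, (F z).re ≤ G z ∧ (F z).re ≤ H z := by
  obtain ⟨F, hF, hFu, hlt⟩ := exists_re_mem_harmonicMajorants hr hu (k := fun z => min (G z) (H z))
    ((hG.1.1.inf hH.1.1).mono sphere_subset_closedBall)
    fun z hz => by
      rcases min_choice (G z) (H z) with h | h <;> rw [h]
      exacts [hG.2 z hz, hH.2 z hz]
  exact ⟨F, hF, hFu, fun z hz =>
    ⟨hFu.1.le_of_le_on_sphere hG.1 (fun w hw => (hlt w hw).le.trans (min_le_left _ _)) hz,
      hFu.1.le_of_le_on_sphere hH.1 (fun w hw => (hlt w hw).le.trans (min_le_right _ _)) hz⟩⟩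

theorem poissonMod_of_notMem (hz : z ∉ ball c r) : poissonMod u c r z = u z :=
  if_neg hz

theorem poissonMod_of_mem (hz : z ∈ ball c r) :
    poissonMod u c r z = ⨅ H : harmonicMajorants u c r, ((H : ℂ → ℝ) z : EReal) :=
  if_pos hz

theorem poissonMod_le {H : ℂ → ℝ} (hH : H ∈ harmonicMajorants u c r) (hz : z ∈ ball c r) :
    poissonMod u c r z ≤ H z :=
  (poissonMod_of_mem hz).trans_le (iInf_le (fun _ : harmonicMajorants u c r => _) ⟨H, hH⟩)

theorem poissonMod_le_const (hc : sphere c r ⊆ V) (hM : ∀ z ∈ V, u z ≤ M) (hz : z ∈ V) :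
    poissonMod u c r z ≤ M := by
  by_cases hzb : z ∈ ball c r
  · refine EReal.le_of_forall_lt_iff_le.1 fun y hy => ?_
    exact poissonMod_le (const_mem_harmonicMajorants fun w hw => (hM w (hc hw)).trans_lt hy) hzb
  · exact (poissonMod_of_notMem hzb).trans_le (hM z hz)

theorem le_poissonMod (hr : 0 < r) (hu : SubharmonicOn u (closedBall c r)) :
    u z ≤ poissonMod u c r z := by
  by_cases hz : z ∈ ball c r
  · rw [poissonMod_of_mem hz]
    exact le_iInf fun H => hu.2.2 c r hr subset_rfl H H.2.1 (fun w hw => (H.2.2 w hw).le) z hz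
  · exact (poissonMod_of_notMem hz).ge

theorem subharmonicOn_poissonMod_ball (hr : 0 < r) (hu : UpperSemicontinuousOn u (sphere c r))
    (hM : ∀ z ∈ sphere c r, u z < M) : SubharmonicOn (poissonMod u c r) (ball c r) := by
  have : Nonempty (harmonicMajorants u c r) := ⟨⟨_, const_mem_harmonicMajorants hM⟩⟩
  refine (SubharmonicOn.iInf_of_directed
    (fun H : harmonicMajorants u c r => (H.2.1.mono ball_subset_closedBall).subharmonicOn)
    fun G H => ?_).congr fun z hz => (poissonMod_of_mem hz).symm
  obtain ⟨F, -, hFu, hF⟩ := exists_re_mem_harmonicMajorants_le hr hu G.2 H.2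
  exact ⟨⟨_, hFu⟩, fun z hz => ⟨EReal.coe_le_coe_iff.2 (hF z (ball_subset_closedBall hz)).1,
    EReal.coe_le_coe_iff.2 (hF z (ball_subset_closedBall hz)).2⟩⟩

theorem exists_lt_add_mul_dist (hu : UpperSemicontinuousOn u (sphere c r))
    (hM : ∀ z ∈ sphere c r, u z < M) {ζ : ℂ} (hζ : ζ ∈ sphere c r) {a : ℝ} (ha : u ζ < a) :
    ∃ C : ℝ, ∀ z ∈ sphere c r, u z < ((a + C * dist z ζ : ℝ) : EReal) := by
  obtain ⟨τ, hτ, hball⟩ := Metric.mem_nhdsWithin_iff.1 (hu ζ hζ a ha)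
  refine ⟨max 0 ((M - a) / τ), fun z hz => ?_⟩
  rcases lt_or_ge (dist z ζ) τ with hzτ | hzτ
  · refine (hball ⟨hzτ, hz⟩).trans_le (EReal.coe_le_coe_iff.2 ?_)
    exact le_add_of_nonneg_right (by positivity)
  · refine (hM z hz).trans_le (EReal.coe_le_coe_iff.2 ?_)
    have : (M - a) / τ * τ ≤ max 0 ((M - a) / τ) * dist z ζ := by gcongr; exact le_max_right _ _
    rw [div_mul_cancel₀ _ hτ.ne'] at this
    linarith

/-- On the boundary circle, `u` lies below the cone `a + C * dist z ζ`, so some harmonic majorant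
takes a value less than `a` at `ζ`. -/
theorem eventually_poissonMod_lt (hr : 0 < r) (hu : UpperSemicontinuousOn u V)
    (hc : closedBall c r ⊆ V) (hM : ∀ z ∈ sphere c r, u z < M) {ζ : ℂ} (hζ : ζ ∈ sphere c r)
    {y : EReal} (hy : u ζ < y) : ∀ᶠ w in 𝓝[V] ζ, poissonMod u c r w < y := by
  obtain ⟨a, hua, hay⟩ := EReal.lt_iff_exists_real_btwn.1 hy
  have husphere := hu.mono (sphere_subset_closedBall.trans hc)
  obtain ⟨C, hC⟩ := exists_lt_add_mul_dist husphere hM hζ hua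
  obtain ⟨F, hF, hFu, hFk⟩ := exists_re_mem_harmonicMajorants hr husphere
    (k := fun z => a + C * dist z ζ) (by fun_prop) hC
  have hFζ : (F ζ).re < a := by simpa using hFk ζ hζ
  have hFa : ∀ᶠ w in 𝓝 ζ, (F w).re < a :=
    (Complex.continuous_re.comp hF.continuous).continuousAt.eventually_lt_const hFζ
  filter_upwards [nhdsWithin_le_nhds hFa, hu ζ (hc (sphere_subset_closedBall hζ)) a hua]
    with w hFw huw
  by_cases hw : w ∈ ball c r
  · exact (poissonMod_le hFu hw).trans_lt ((EReal.coe_lt_coe_iff.2 hFw).trans hay)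
  · exact (poissonMod_of_notMem hw).trans_lt (huw.trans hay)

theorem upperSemicontinuousOn_poissonMod (hr : 0 < r) (hu : UpperSemicontinuousOn u V)
    (hc : closedBall c r ⊆ V) (hM : ∀ z ∈ sphere c r, u z < M) :
    UpperSemicontinuousOn (poissonMod u c r) V := by
  intro z hz y hy
  rcases lt_trichotomy (dist z c) r with hzr | hzr | hzr
  · have hball := (subharmonicOn_poissonMod_ball hr
      (hu.mono (sphere_subset_closedBall.trans hc)) hM).1 z hzr y hy
    rw [isOpen_ball.nhdsWithin_eq hzr] at hball
    exact nhdsWithin_le_nhds hball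
  · rw [poissonMod_of_notMem hzr.not_lt] at hy
    exact eventually_poissonMod_lt hr hu hc hM hzr hy
  · rw [poissonMod_of_notMem hzr.not_gt] at hy
    have hout : ∀ᶠ w in 𝓝 z, r < dist w c :=
      (continuous_id.dist continuous_const).continuousAt.eventually_const_lt hzr
    filter_upwards [hu z hz y hy, nhdsWithin_le_nhds hout] with w huw hw
    exact (poissonMod_of_notMem hw.not_gt).trans_lt huw

theorem SubharmonicOn.exists_real_forall_sphere_lt (hu : SubharmonicOn u (closedBall c r)) :
    ∃ M : ℝ, ∀ z ∈ sphere c r, u z < M := by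
  obtain ⟨M, hM⟩ := exists_real_forall_le_of_isCompact (isCompact_closedBall c r) hu.1 hu.2.1
  exact ⟨M + 1, fun z hz => (hM z (sphere_subset_closedBall hz)).trans_lt
    (EReal.coe_lt_coe_iff.2 (lt_add_one M))⟩

theorem subharmonicOn_poissonMod (hr : 0 < r) (hu : SubharmonicOn u V)
    (hc : closedBall c r ⊆ V) : SubharmonicOn (poissonMod u c r) V := by
  obtain ⟨M, hM⟩ := (hu.mono hc).exists_real_forall_sphere_lt
  have hball := subharmonicOn_poissonMod_ball hr (hu.1.mono (sphere_subset_closedBall.trans hc)) hM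
  refine subharmonicOn_of_submeanAt (upperSemicontinuousOn_poissonMod hr hu.1 hc hM)
    (fun z hz => ?_) fun z hz => ?_
  · by_cases hzb : z ∈ ball c r
    · exact hball.2.1 z hzb
    · exact (poissonMod_of_notMem hzb).trans_lt (hu.2.1 z hz)
  · by_cases hzb : z ∈ ball c r
    · exact hball.submeanAt (isOpen_ball.mem_nhds hzb)
    · exact (hu.submeanAt (mem_interior_iff_mem_nhds.1 hz)).of_le
        (Eventually.of_forall fun w => le_poissonMod hr (hu.mono hc)) (poissonMod_of_notMem hzb).le

theorem exists_real_le_poissonMod (hr : 0 < r) (hu : SubharmonicOn u (closedBall c r))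
    (huc : u c ≠ ⊥) :
    ∃ N : ℝ, ∀ z ∈ closedBall c (r / 2), (N : EReal) ≤ poissonMod u c r z := by
  obtain ⟨M, hM⟩ := hu.exists_real_forall_sphere_lt
  have hcr := mem_closedBall_self hr.le (x := c)
  lift u c to ℝ using ⟨(hu.2.1 c hcr).ne, huc⟩ with a ha
  refine ⟨M - 3 * (M - a), fun z hz => ?_⟩
  have hzr : z ∈ ball c r := closedBall_subset_ball (by linarith) hz
  rw [poissonMod_of_mem hzr]
  refine le_iInf fun H => EReal.coe_le_coe_iff.2 ?_
  obtain ⟨F, hF, hFu, hFle⟩ := exists_re_mem_harmonicMajorants_le hr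
    (hu.1.mono sphere_subset_closedBall) H.2 (const_mem_harmonicMajorants hM)
  have hFM : ∀ w ∈ closedBall c r, 0 ≤ M - (F w).re := fun w hw => sub_nonneg.2 (hFle w hw).2
  have haF : a ≤ (F c).re := EReal.coe_le_coe_iff.1 <| ha.trans_le <|
    (le_poissonMod hr hu).trans (poissonMod_le hFu (mem_ball_self hr))
  have hzc : ‖z - c‖ ≤ r / 2 := mem_closedBall_iff_norm.1 hz
  have hratio : (r + ‖z - c‖) / (r - ‖z - c‖) ≤ 3 := by
    rw [div_le_iff₀ (by linarith)]
    linarith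
  have hharnack := (harnack_le (harmonicOnNhd_sub_re hF M _)
    (fun w hw => hFM w (sphere_subset_closedBall hw)) hzr).trans
      (mul_le_mul_of_nonneg_right hratio (hFM c hcr))
  linarith [(hFle z (ball_subset_closedBall hzr)).1]

end PoissonMod

theorem SubharmonicOn.exists_ge_of_finset {u : ℂ → EReal} {V : Set ℂ} {r M : ℝ} (hr : 0 < r)
    (hu : SubharmonicOn u V) (hM : ∀ z ∈ V, u z ≤ M) (T : Finset ℂ)
    (hT : ∀ c ∈ T, closedBall c r ⊆ V ∧ u c ≠ ⊥) :
    ∃ v : ℂ → EReal, SubharmonicOn v V ∧ (∀ z ∈ V, v z ≤ M) ∧ (∀ z, u z ≤ v z) ∧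
      (∀ z, (∀ c ∈ T, z ∉ ball c r) → v z = u z) ∧
      ∃ N : ℝ, ∀ c ∈ T, ∀ z ∈ closedBall c (r / 2), (N : EReal) ≤ v z := by
  induction T using Finset.induction_on with
  | empty => exact ⟨u, hu, hM, fun _ => le_rfl, fun _ _ => rfl, 0, by simp⟩
  | insert a T _ ih =>
    simp only [Finset.forall_mem_insert] at hT ⊢
    obtain ⟨v, hv, hvM, huv, hvu, N, hN⟩ := ih hT.2
    obtain ⟨⟨haV, hua⟩, -⟩ := hT
    have hv' := hv.mono haV
    obtain ⟨N', hN'⟩ := exists_real_le_poissonMod hr hv' fun h => hua (le_bot_iff.1 (h ▸ huv a))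
    refine ⟨poissonMod v a r, subharmonicOn_poissonMod hr hv haV,
      fun z hz => poissonMod_le_const (sphere_subset_closedBall.trans haV) hvM hz,
      fun z => (huv z).trans (le_poissonMod hr hv'),
      fun z hz => (poissonMod_of_notMem hz.1).trans (hvu z hz.2), min N N', fun z hz => ?_,
      fun c hc z hz => ?_⟩
    · exact (EReal.coe_le_coe_iff.2 (min_le_right _ _)).trans (hN' z hz)
    · exact (EReal.coe_le_coe_iff.2 (min_le_left _ _)).trans
        ((hN c hc z hz).trans (le_poissonMod hr hv'))

theorem SubharmonicOn.exists_ge_bounded_below_near {u : ℂ → EReal} {V K : Set ℂ} {r M : ℝ}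
    (hr : 0 < r) (hu : SubharmonicOn u V) (hM : ∀ z ∈ V, u z ≤ M) (hK : IsCompact K)
    (hKV : ∀ ζ ∈ K, closedBall ζ (2 * r) ⊆ V) (hKu : ∀ ζ ∈ K, ∃ᶠ z in 𝓝 ζ, u z ≠ ⊥) :
    ∃ v : ℂ → EReal, SubharmonicOn v V ∧ (∀ z ∈ V, v z ≤ M) ∧ (∀ z, u z ≤ v z) ∧
      (∀ z, (∀ ζ ∈ K, 2 * r ≤ dist z ζ) → v z = u z) ∧
      ∃ N : ℝ, ∀ ζ ∈ K, ∀ᶠ z in 𝓝 ζ, (N : EReal) ≤ v z := by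
  have hcenter : ∀ ζ ∈ K, ∃ c, u c ≠ ⊥ ∧ dist c ζ < r / 2 := fun ζ hζ =>
    ((hKu ζ hζ).and_eventually (ball_mem_nhds ζ (by positivity : 0 < r / 2))).exists
  choose! c huc hcζ using hcenter
  obtain ⟨T, hTK, hT⟩ := hK.elim_nhds_subcover (fun ζ => ball (c ζ) (r / 2))
    fun ζ hζ => isOpen_ball.mem_nhds (mem_ball'.2 (hcζ ζ hζ))
  obtain ⟨v, hv, hvM, huv, hvu, N, hN⟩ := hu.exists_ge_of_finset hr hM (T.image c) <| by
    refine Finset.forall_mem_image.2 fun ζ hζ => ⟨Subset.trans ?_ (hKV ζ (hTK ζ hζ)),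
      huc ζ (hTK ζ hζ)⟩
    exact closedBall_subset_closedBall' (by linarith [hcζ ζ (hTK ζ hζ)])
  rw [Finset.forall_mem_image] at hN
  refine ⟨v, hv, hvM, huv, fun z hz => hvu z (Finset.forall_mem_image.2 fun ζ hζ => ?_), N,
    fun ζ hζ => ?_⟩
  · rw [mem_ball, not_lt]
    linarith [hz ζ (hTK ζ hζ), hcζ ζ (hTK ζ hζ), dist_triangle z (c ζ) ζ]
  · obtain ⟨ξ, hξ, hζξ⟩ := mem_iUnion₂.1 (hT hζ)
    filter_upwards [isOpen_ball.mem_nhds hζξ] with z hz using hN hξ z (ball_subset_closedBall hz)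

/-! ### Gluing -/

theorem SubharmonicOn.union {u v : ℂ → EReal} {U V : Set ℂ} (hU : IsOpen U) (hV : IsOpen V)
    (hu : SubharmonicOn u U) (hv : SubharmonicOn v V)
    (hUV : ∀ z ∈ U \ V, ∀ᶠ w in 𝓝 z, w ∈ V → v w ≤ u w)
    (hVU : ∀ z ∈ V \ U, ∀ᶠ w in 𝓝 z, w ∈ U → u w ≤ v w) :
    SubharmonicOn (fun z => (⨆ _ : z ∈ U, u z) ⊔ ⨆ _ : z ∈ V, v z) (U ∪ V) := by
  refine subharmonicOn_of_locally fun z hz => ?_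
  by_cases hzU : z ∈ U
  · by_cases hzV : z ∈ V
    · refine ⟨U ∩ V, (hU.inter hV).mem_nhds ⟨hzU, hzV⟩, ((hu.mono inter_subset_left).sup
        (hv.mono inter_subset_right)).congr fun w hw => ?_⟩
      simp only [iSup_pos hw.1, iSup_pos hw.2]
    · refine ⟨_, inter_mem (hU.mem_nhds hzU) (hUV z ⟨hzU, hzV⟩),
        (hu.mono inter_subset_left).congr fun w hw => ?_⟩
      simp only [iSup_pos hw.1]
      exact (sup_eq_left.2 (iSup_le hw.2)).symm
  · have hzV : z ∈ V := hz.resolve_left hzU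
    refine ⟨_, inter_mem (hV.mem_nhds hzV) (hVU z ⟨hzV, hzU⟩),
      (hv.mono inter_subset_left).congr fun w hw => ?_⟩
    simp only [iSup_pos hw.1]
    exact (sup_eq_right.2 (iSup_le hw.2)).symm

theorem subharmonicOn_const_mul_norm_sub_sq_sub {a : ℝ} (ha : 0 ≤ a) (b : ℝ) (p : ℂ) (s : Set ℂ) :
    SubharmonicOn (fun z => ((a * ‖z - p‖ ^ 2 - b : ℝ) : EReal)) s :=
  subharmonicOn_of_submeanAt (upperSemicontinuousOn_coe (by fun_prop))
    (fun _ _ => EReal.coe_lt_top _) fun z _ => submeanAt_const_mul_norm_sub_sq_sub ha b p z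

theorem exists_mul_sq_sub_lt_and_forall_ge_lt {ρ R : ℝ} (hρ : 0 ≤ ρ) (hρR : ρ < R)
    (M N : ℝ) : ∃ a ≥ 0, ∃ b : ℝ, a * ρ ^ 2 - b < N ∧ ∀ s ≥ R, M < a * s ^ 2 - b := by
  have hd : 0 < R ^ 2 - ρ ^ 2 := by nlinarith
  set a := (|M - N| + 2) / (R ^ 2 - ρ ^ 2)
  have ha : 0 ≤ a := by positivity
  have had : a * (R ^ 2 - ρ ^ 2) = |M - N| + 2 := div_mul_cancel₀ _ hd.ne'
  refine ⟨a, ha, a * ρ ^ 2 - N + 1, by linarith, fun s hs => ?_⟩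
  have : a * R ^ 2 ≤ a * s ^ 2 := by gcongr; linarith
  linarith [le_abs_self (M - N)]

theorem SubharmonicOn.exists_univ_of_le_near_sphere {v : ℂ → EReal} {p : ℂ} {ρ R M N : ℝ}
    (hρ : 0 ≤ ρ) (hρR : ρ < R) (hv : SubharmonicOn v (ball p R)) (hM : ∀ z ∈ ball p R, v z ≤ M)
    (hN : ∀ ζ ∈ sphere p ρ, ∀ᶠ z in 𝓝 ζ, (N : EReal) ≤ v z) :
    ∃ w : ℂ → EReal, SubharmonicOn w univ ∧ (∀ z ∈ ball p ρ, w z = v z) ∧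
      (∀ z ∈ ball p R, v z ≤ w z) ∧ ∀ z ∉ ball p R, w z ≠ ⊥ := by
  obtain ⟨a, ha, b, hqN, hqM⟩ := exists_mul_sq_sub_lt_and_forall_ge_lt hρ hρR M N
  set q : ℂ → ℝ := fun z => a * ‖z - p‖ ^ 2 - b
  have hq : Continuous q := by fun_prop
  have hcover : ball p R ∪ (closedBall p ρ)ᶜ = univ :=
    compl_subset_iff_union.1 (compl_subset_compl.2 (closedBall_subset_ball hρR))
  have hqv : ∀ z ∈ ball p R \ (closedBall p ρ)ᶜ, ∀ᶠ w in 𝓝 z, w ∈ (closedBall p ρ)ᶜ →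
      (q w : EReal) ≤ v w := by
    rintro z ⟨-, hz⟩
    rcases (mem_closedBall.1 (notMem_compl_iff.1 hz)).lt_or_eq with hzρ | hzρ
    · filter_upwards [isOpen_ball.mem_nhds hzρ] with w hw hw'
      exact absurd (ball_subset_closedBall hw) hw'
    · have hqz : q z < N := by simpa only [q, ← dist_eq_norm, hzρ] using hqN
      filter_upwards [hN z hzρ, hq.continuousAt.eventually_lt_const hqz] with w hw hqw _
      exact (EReal.coe_le_coe_iff.2 hqw.le).trans hw
  have hvq : ∀ z ∈ (closedBall p ρ)ᶜ \ ball p R, ∀ᶠ w in 𝓝 z, w ∈ ball p R → v w ≤ q w := by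
    rintro z ⟨-, hz⟩
    have hqz : M < q z := hqM _ (by simpa [dist_eq_norm] using hz)
    filter_upwards [hq.continuousAt.eventually_const_lt hqz] with w hqw hw
    exact (hM w hw).trans (EReal.coe_le_coe_iff.2 hqw.le)
  refine ⟨_, hcover ▸ hv.union isOpen_ball isClosed_closedBall.isOpen_compl
    (subharmonicOn_const_mul_norm_sub_sq_sub ha b p _) hqv hvq, fun z hz => ?_, fun z hz => ?_,
    fun z hz => ?_⟩
  · have hz' : z ∉ (closedBall p ρ)ᶜ := notMem_compl_iff.2 (ball_subset_closedBall hz)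
    simp only [ball_subset_ball hρR.le hz, hz', iSup_pos, iSup_false, sup_bot_eq]
  · simp only [hz, iSup_pos, le_sup_left]
  · have hz' : z ∈ (closedBall p ρ)ᶜ := (hcover.symm.subset (mem_univ z)).resolve_left hz
    simpa only [hz, hz', iSup_pos, iSup_false, bot_sup_eq] using EReal.coe_ne_bot (q z)

theorem SubharmonicOn.exists_univ_eq_bot_near {u : ℂ → EReal} {U : Set ℂ} (hU : IsOpen U)
    (hUc : IsPreconnected U) (hu : SubharmonicOn u U) {z₁ p : ℂ} (hz₁ : z₁ ∈ U) (hne : u z₁ ≠ ⊥)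
    (hp : p ∈ U) :
    ∃ v : ℂ → EReal, SubharmonicOn v univ ∧ (∀ᶠ z in 𝓝 p, u z = ⊥ → v z = ⊥) ∧ v z₁ ≠ ⊥ := by
  obtain ⟨R, hR, hRU⟩ := nhds_basis_closedBall.mem_iff.1 (hU.mem_nhds hp)
  obtain ⟨M, hM⟩ := exists_real_forall_le_of_isCompact (isCompact_closedBall p R)
    (hu.1.mono hRU) fun z hz => hu.2.1 z (hRU hz)
  have hKU : sphere p (R / 2) ⊆ U := sphere_subset_closedBall.trans
    ((closedBall_subset_closedBall (by linarith)).trans hRU)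
  have hKu : ∀ ζ ∈ sphere p (R / 2), ∃ᶠ z in 𝓝 ζ, u z ≠ ⊥ := fun ζ hζ h => by
    simp only [not_not] at h
    exact hne (hu.forall_eq_bot_of_eventually_eq_bot hU hUc (hKU hζ) h z₁ hz₁)
  obtain ⟨v, hv, hvM, huv, hvu, N, hN⟩ := (hu.mono (ball_subset_closedBall.trans hRU)
    ).exists_ge_bounded_below_near (r := R / 8) (by positivity)
    (fun z hz => hM z (ball_subset_closedBall hz)) (isCompact_sphere p (R / 2))
    (fun ζ hζ => closedBall_subset_ball' (by linarith [mem_sphere.1 hζ])) hKu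
  obtain ⟨w, hw, hwv, hvw, hw_ne⟩ := hv.exists_univ_of_le_near_sphere (by positivity)
    (half_lt_self hR) hvM hN
  refine ⟨w, hw, ?_, fun hbot => ?_⟩
  · filter_upwards [ball_mem_nhds p (by positivity : 0 < R / 4)] with z hz huz
    rw [hwv z (ball_subset_ball (by linarith) hz), hvu z fun ζ hζ => ?_, huz]
    linarith [mem_sphere.1 hζ, mem_ball.1 hz, dist_triangle_left ζ p z]
  · by_cases hz : z₁ ∈ ball p R
    · exact hne (le_bot_iff.1 (((huv z₁).trans (hvw z₁ hz)).trans_eq hbot))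
    · exact hw_ne z₁ hz hbot

/-! ### Countable sums -/

theorem SubharmonicOn.finset_sum {ι : Type*} {v : ι → ℂ → EReal} {V : Set ℂ} (s : Finset ι)
    (hv : ∀ i ∈ s, SubharmonicOn (v i) V) : SubharmonicOn (fun z => ∑ i ∈ s, v i z) V := by
  induction s using Finset.cons_induction with
  | empty => simpa using subharmonicOn_const 0 V
  | cons i s hi ih =>
    simp only [Finset.forall_mem_cons] at hv
    simpa only [Finset.sum_cons] using hv.1.add (ih hv.2)

theorem antitone_sum_range_add_of_nonpos {M : Type*} [AddCommMonoid M] [Preorder M]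
    [AddLeftMono M] {x : ℕ → M} {N : ℕ} (hx : ∀ i ≥ N, x i ≤ 0) :
    Antitone fun n => ∑ i ∈ Finset.range (n + N), x i := by
  refine antitone_nat_of_succ_le fun n => ?_
  rw [add_right_comm, Finset.sum_range_succ]
  exact add_le_of_nonpos_right (hx _ (Nat.le_add_left N n))

theorem limsup_sum_range_eq_iInf {x : ℕ → EReal} {N : ℕ} (hx : ∀ i ≥ N, x i ≤ 0) :
    limsup (fun n => ∑ i ∈ Finset.range n, x i) atTop =
      ⨅ n, ∑ i ∈ Finset.range (n + N), x i :=
  (limsup_nat_add (fun n => ∑ i ∈ Finset.range n, x i) N).symm.trans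
    (tendsto_atTop_iInf (antitone_sum_range_add_of_nonpos hx)).limsup_eq

theorem limsup_sum_range_eq_bot {x : ℕ → EReal} {i : ℕ} (hi : x i = ⊥) :
    limsup (fun n => ∑ j ∈ Finset.range n, x j) atTop = ⊥ := by
  refine (Tendsto.congr' ?_ tendsto_const_nhds).limsup_eq
  filter_upwards [eventually_gt_atTop i] with n hn
  rw [← Finset.add_sum_erase _ _ (Finset.mem_range.2 hn), hi, EReal.bot_add]

theorem subharmonicOn_limsup_sum_range {w : ℕ → ℂ → EReal} {U : Set ℂ} (hU : IsOpen U)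
    (hw : ∀ i, SubharmonicOn (w i) U)
    (hw_nonpos : ∀ z ∈ U, ∀ᶠ x in (atTop : Filter ℕ) ×ˢ 𝓝 z, w x.1 x.2 ≤ 0) :
    SubharmonicOn (fun z => limsup (fun n => ∑ i ∈ Finset.range n, w i z) atTop) U := by
  refine subharmonicOn_of_locally fun z hz => ?_
  obtain ⟨P, hP, Q, hQ, hPQ⟩ := eventually_prod_iff.1 (hw_nonpos z hz)
  obtain ⟨N, hN⟩ := eventually_atTop.1 hP
  have hVw : ∀ y ∈ U ∩ {y | Q y}, ∀ i ≥ N, w i y ≤ 0 := fun y hy i hi => hPQ (hN i hi) hy.2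
  refine ⟨U ∩ {y | Q y}, inter_mem (hU.mem_nhds hz) hQ, SubharmonicOn.congr
    (SubharmonicOn.iInf_of_directed (fun n => SubharmonicOn.finset_sum (Finset.range (n + N))
      fun i _ => (hw i).mono inter_subset_left) fun m n => ⟨max m n, fun y hy => ?_⟩)
    fun y hy => (limsup_sum_range_eq_iInf (hVw y hy)).symm⟩
  have hanti := antitone_sum_range_add_of_nonpos (hVw y hy)
  exact ⟨hanti (le_max_left m n), hanti (le_max_right m n)⟩

theorem SubharmonicOn.exists_nonpos_and_neg_le {v : ℂ → EReal} {U K : Set ℂ}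
    (hv : SubharmonicOn v U) (hK : IsCompact K) (hKU : K ⊆ U) {z₁ : ℂ} (hz₁ : z₁ ∈ U)
    (hne : v z₁ ≠ ⊥) {ε : ℝ} (hε : 0 < ε) :
    ∃ w : ℂ → EReal, SubharmonicOn w U ∧ (∀ z ∈ K, w z ≤ 0) ∧ ((-ε : ℝ) : EReal) ≤ w z₁ ∧
      ∀ z, v z = ⊥ → w z = ⊥ := by
  obtain ⟨M, hM⟩ := exists_real_forall_le_of_isCompact (hK.insert z₁)
    (hv.1.mono (insert_subset hz₁ hKU)) fun z hz => hv.2.1 z (insert_subset hz₁ hKU hz)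
  obtain ⟨a, ha⟩ : ∃ a : ℝ, v z₁ = a := ⟨_, (EReal.coe_toReal (hv.2.1 z₁ hz₁).ne hne).symm⟩
  have haM : a ≤ M := by simpa [ha] using hM z₁ (mem_insert _ _)
  have hpos : 0 < M - a + 1 := by linarith
  have he : 0 < ε / (M - a + 1) := by positivity
  refine ⟨fun z => (v z + ((-M : ℝ) : EReal)) * ((ε / (M - a + 1) : ℝ) : EReal),
    (hv.add (subharmonicOn_const _ _)).mul_const he, fun z hz => ?_, ?_, fun z hz => ?_⟩
  · refine mul_nonpos_of_nonpos_of_nonneg ?_ (EReal.coe_nonneg.2 he.le)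
    calc v z + ((-M : ℝ) : EReal) ≤ M + ((-M : ℝ) : EReal) := by
          gcongr
          exact hM z (mem_insert_of_mem _ hz)
      _ = 0 := by rw [← EReal.coe_add, add_neg_cancel, EReal.coe_zero]
  · simp only [ha]
    rw [← EReal.coe_add, ← EReal.coe_mul, EReal.coe_le_coe_iff, mul_div_assoc',
      le_div_iff₀ hpos]
    linarith
  · simp only [hz, EReal.bot_add, EReal.bot_mul_coe_of_pos he]

theorem exists_subharmonicOn_univ_forall_eq_bot {v : ℕ → ℂ → EReal}
    (hv : ∀ i, SubharmonicOn (v i) univ) {z₁ : ℂ} (hne : ∀ i, v i z₁ ≠ ⊥) :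
    ∃ w : ℂ → EReal, SubharmonicOn w univ ∧ w z₁ ≠ ⊥ ∧ ∀ i z, v i z = ⊥ → w z = ⊥ := by
  choose w hw hw_nonpos hwz₁ hvw using fun i : ℕ =>
    (hv i).exists_nonpos_and_neg_le (isCompact_closedBall 0 (i : ℝ)) (subset_univ _)
      (mem_univ z₁) (hne i) (by positivity : (0 : ℝ) < (1 / 2) ^ i)
  refine ⟨_, subharmonicOn_limsup_sum_range isOpen_univ hw fun z _ => ?_, ?_,
    fun i z hz => limsup_sum_range_eq_bot (hvw i z hz)⟩
  · obtain ⟨N, hN⟩ := exists_nat_gt ‖z‖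
    filter_upwards [prod_mem_prod (Ici_mem_atTop N)
      (isOpen_ball.mem_nhds (mem_ball_zero_iff.2 hN))] with ⟨i, y⟩ ⟨hi, hy⟩
    exact hw_nonpos i y
      (closedBall_subset_closedBall (Nat.cast_le.2 hi) (ball_subset_closedBall hy))
  · have hsum (n : ℕ) : ((-2 : ℝ) : EReal) ≤ ∑ i ∈ Finset.range n, w i z₁ := by
      calc ((-2 : ℝ) : EReal) ≤ ((-∑ i ∈ Finset.range n, (1 / 2) ^ i : ℝ) : EReal) :=
            EReal.coe_le_coe_iff.2 (neg_le_neg (sum_geometric_two_le n))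
        _ = ∑ i ∈ Finset.range n, ((-(1 / 2) ^ i : ℝ) : EReal) := by
            rw [← Finset.sum_neg_distrib]
            exact map_sum (⟨⟨(↑), EReal.coe_zero⟩, EReal.coe_add⟩ : ℝ →+ EReal) _ _
        _ ≤ ∑ i ∈ Finset.range n, w i z₁ := Finset.sum_le_sum fun i _ => hwz₁ i
    exact ((EReal.bot_lt_coe _).trans_le
      (le_limsup_of_frequently_le (Eventually.of_forall hsum).frequently)).ne'

theorem SubharmonicOn.polarSet_eq_bot {u : ℂ → EReal} {U : Set ℂ} (hU : IsOpen U)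
    (hUc : IsPreconnected U) (hu : SubharmonicOn u U) {z₁ : ℂ} (hz₁ : z₁ ∈ U) (hne : u z₁ ≠ ⊥) :
    PolarSet {z ∈ U | u z = ⊥} := by
  choose! v hv hvp hvz₁ using fun p (hp : p ∈ U) => hu.exists_univ_eq_bot_near hU hUc hz₁ hne hp
  obtain ⟨s, hsU, hsc, hs⟩ := TopologicalSpace.countable_cover_nhdsWithin fun p hp =>
    mem_nhdsWithin_of_mem_nhds (hvp p hp)
  obtain ⟨p, rfl⟩ := hsc.exists_eq_range (nonempty_of_mem (mem_iUnion₂.1 (hs hz₁)).choose_spec.1)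
  rw [range_subset_iff] at hsU
  obtain ⟨w, hw, hwz₁, hvw⟩ := exists_subharmonicOn_univ_forall_eq_bot
    (fun i => hv (p i) (hsU i)) fun i => hvz₁ (p i) (hsU i)
  refine ⟨w, hw, fun h => hwz₁ (h z₁), fun z ⟨hzU, hz⟩ => ?_⟩
  obtain ⟨_, ⟨i, rfl⟩, hzi⟩ := mem_iUnion₂.1 (hs hzU)
  exact hvw i z (hzi hz)

theorem PolarSet.mono {A B : Set ℂ} (hB : PolarSet B) (hAB : A ⊆ B) : PolarSet A :=
  let ⟨u, hu, hne, hbot⟩ := hB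
  ⟨u, hu, hne, fun z hz => hbot z (hAB hz)⟩

/-- if `f` is holomorphic on a domain `U ⊆ ℂ`, `E ⊆ ℂⁿ` meets `f(U)`, and
`f⁻¹(f(U) ∩ E)` is non-polar, then every plurisubharmonic `h` on `ℂⁿ` with `h = -∞` on
`E` satisfies `h ∘ f ≡ -∞` on `U`; hence `f(U) ⊆ E*_{ℂⁿ}`. -/
theorem curve_in_pluripolar_hull {n : ℕ} (U : Set ℂ) (hUo : IsOpen U)
    (hUc : IsConnected U) (f : ℂ → Fin n → ℂ) (hf : DifferentiableOn ℂ f U)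
    (E : Set (Fin n → ℂ))
    (hne : (f '' U ∩ E).Nonempty)
    (hnp : ¬ PolarSet (U ∩ f ⁻¹' (f '' U ∩ E))) :
    (∀ h : (Fin n → ℂ) → EReal, PlurisubharmonicOn h Set.univ →
        (∀ w ∈ E, h w = ⊥) → ∀ z ∈ U, h (f z) = ⊥) ∧
    f '' U ⊆ PluripolarHull E Set.univ := by
  have hbot : ∀ h : (Fin n → ℂ) → EReal, PlurisubharmonicOn h univ → (∀ w ∈ E, h w = ⊥) →
      ∀ z ∈ U, h (f z) = ⊥ := by
    intro h hh hE z hz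
    by_contra hne
    have hpolar : PolarSet {z ∈ U | h (f z) = ⊥} :=
      (hh.comp isOpen_univ hUo hf (mapsTo_univ f U)).polarSet_eq_bot hUo hUc.isPreconnected hz hne
    exact hnp (hpolar.mono fun w hw => ⟨hw.1, hE _ hw.2.2⟩)
  refine ⟨hbot, ?_⟩
  rintro _ ⟨z, hz, rfl⟩
  exact ⟨mem_univ _, fun h hh hE => hbot h hh hE z hz⟩
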